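/- arXiv:1605.03727 — 2 statements merged into one kernel-verified Lean document; each statement's English description precedes it below -/
import Mathlib

section
/- A p-form F at a point of an n-dimensional Lorentzian spacetime is VSI₀, i.e., all zeroth-order scalar polynomial invariants constructed from F alone vanish, if and only if F is of type N. -/
open scoped BigOperators

noncomputable section

namespace VSI

/-! ### Basic setup: tensor fields on an `n`-dimensional coordinate chart -/

/-- A point of an `n`-dimensional coordinate chart. -/
abbrev Pt (n : ℕ) := Fin n → ℝ

/-- A covariant tensor field of rank `k`, given by its components. -/
abbrev TensorField (n k : ℕ) := Pt n → (Fin k → Fin n) → ℝ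

/-- A vector field, given by its components. -/
abbrev VecField (n : ℕ) := Pt n → Fin n → ℝ

/-- A field of `n × n` matrices (e.g. a metric). -/
abbrev MetricField (n : ℕ) := Pt n → Matrix (Fin n) (Fin n) ℝ

/-- Partial derivative of a scalar function along the `a`-th coordinate. -/
def pd {n : ℕ} (f : Pt n → ℝ) (a : Fin n) (x : Pt n) : ℝ :=
  fderiv ℝ f x (Pi.single a 1)

/-- Partial derivative masked to the transverse directions (coordinates `≥ 2`). -/
def pdT {n : ℕ} (f : Pt n → ℝ) (a : Fin n) (x : Pt n) : ℝ :=
  if 2 ≤ (a : ℕ) then pd f a x else 0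

/-- A function on the chart is independent of the coordinate `r` (coordinate number 1). -/
def IndepOfR {n : ℕ} {α : Type*} (f : Pt n → α) : Prop :=
  ∀ x x' : Pt n, (∀ i : Fin n, (i : ℕ) ≠ 1 → x i = x' i) → f x = f x'

/-- A smooth symmetric metric of Lorentzian signature `(-,+,…,+)`. -/
def IsLorentzMetric {n : ℕ} (g : MetricField n) : Prop :=
  (∀ a b, ContDiff ℝ (⊤ : ℕ∞) fun x => g x a b) ∧ (∀ x, (g x).IsSymm) ∧
  (∀ x, ∃ P : Matrix (Fin n) (Fin n) ℝ, IsUnit P.det ∧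
    P.transpose * g x * P = Matrix.diagonal fun i : Fin n => if (i : ℕ) = 0 then (-1 : ℝ) else 1)

/-- Metric pairing of two vectors at a point. -/
def gdot {n : ℕ} (g : MetricField n) (x : Pt n) (X Y : Fin n → ℝ) : ℝ :=
  ∑ a, ∑ b, g x a b * X a * Y b

/-- Index lowering of a vector field. -/
def lower {n : ℕ} (g : MetricField n) (ℓ : VecField n) (x : Pt n) (a : Fin n) : ℝ :=
  ∑ b, g x a b * ℓ x b

/-- The 1-form (rank-1 covariant tensor field) associated with a vector field. -/
def lowerField {n : ℕ} (g : MetricField n) (ℓ : VecField n) : TensorField n 1 :=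
  fun x idx => lower g ℓ x (idx 0)

/-- Christoffel symbols `Γ^a_{bc}` of the Levi-Civita connection of `g`. -/
def christoffel {n : ℕ} (g : MetricField n) (x : Pt n) (a b c : Fin n) : ℝ :=
  (1/2) * ∑ d, (g x)⁻¹ a d *
    (pd (fun y => g y d c) b x + pd (fun y => g y b d) c x - pd (fun y => g y b c) d x)

/-- Covariant derivative of a covariant tensor field; the new (derivative) index is
the first index of the result. -/
def covD {n k : ℕ} (g : MetricField n) (T : TensorField n k) : TensorField n (k+1) :=
  fun x idx =>
    pd (fun y => T y fun m => idx m.succ) (idx 0) x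
    - ∑ m : Fin k, ∑ e : Fin n,
        christoffel g x e (idx 0) (idx m.succ) * T x (Function.update (fun m' => idx m'.succ) m e)

/-- Iterated covariant derivative. -/
def covDIter {n k : ℕ} (g : MetricField n) (T : TensorField n k) : (I : ℕ) → TensorField n (k + I)
  | 0 => T
  | I + 1 => covD g (covDIter g T I)

/-! ### Scalar polynomial invariants and tensor concomitants -/

/-- A scheme describing a polynomial concomitant of a rank-`k` tensor field: a full
metric contraction of a tensor product of covariant derivatives (of orders `ord j`)
of the field, with `r` free indices left over.  `m` is the number of contracted
index pairs; `slots` enumerates all index slots of the tensor product. -/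
structure ConcomScheme (k r : ℕ) where
  N : ℕ
  hN : 0 < N
  ord : Fin N → ℕ
  m : ℕ
  slots : ((Fin m × Bool) ⊕ Fin r) ≃ (Σ j : Fin N, Fin (k + ord j))

/-- The value of a concomitant scheme: all contracted index pairs are contracted with
the inverse metric. -/
def ConcomScheme.value {k r : ℕ} (S : ConcomScheme k r) {n : ℕ} (g : MetricField n)
    (T : TensorField n k) : TensorField n r := fun x free =>
  ∑ φ : Fin S.m × Bool → Fin n,
    (∏ i : Fin S.m, (g x)⁻¹ (φ (i, false)) (φ (i, true))) *
    ∏ j : Fin S.N, covDIter g T (S.ord j) x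
      (fun s => Sum.elim φ free (S.slots.symm ⟨j, s⟩))

/-- All scalar polynomial invariants constructed from `T` and its covariant
derivatives up to order `I` vanish. -/
def IsVSIUpTo {n k : ℕ} (g : MetricField n) (T : TensorField n k) (I : ℕ) : Prop :=
  ∀ S : ConcomScheme k 0, (∀ j, S.ord j ≤ I) → ∀ x v, S.value g T x v = 0

/-- All scalar polynomial invariants of arbitrary order vanish. -/
def IsVSI {n k : ℕ} (g : MetricField n) (T : TensorField n k) : Prop :=
  ∀ I : ℕ, IsVSIUpTo g T I

/-- All zeroth order scalar polynomial invariants of `T` vanish at the point `x`. -/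
def IsVSI0At {n k : ℕ} (g : MetricField n) (T : TensorField n k) (x : Pt n) : Prop :=
  ∀ S : ConcomScheme k 0, (∀ j, S.ord j = 0) → ∀ v, S.value g T x v = 0

/-- A rank-`r` tensor field `G` is (polynomially) constructed from `T`, its covariant
derivatives of arbitrary order and the metric. -/
def IsConstructedFrom {n k r : ℕ} (g : MetricField n) (T : TensorField n k)
    (G : TensorField n r) : Prop :=
  G ∈ Submodule.span ℝ {G' : TensorField n r | ∃ S : ConcomScheme k r, G' = S.value g T}

/-- A symmetric-2-tensor "correction" to the standard electromagnetic energy-momentum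
tensor: constructed from `T` and its covariant derivatives, where each monomial either
contains at least three factors of the field or at least one covariant derivative
(i.e. it comes from a non-Maxwellian term of a generalized electrodynamics). -/
def IsCorrectionTensor {n k : ℕ} (g : MetricField n) (T : TensorField n k)
    (Tc : TensorField n 2) : Prop :=
  Tc ∈ Submodule.span ℝ {G : TensorField n 2 |
    ∃ S : ConcomScheme k 2, (3 ≤ S.N ∨ ∃ j, 1 ≤ S.ord j) ∧ G = S.value g T}

/-! ### p-forms, type N, Lie derivative -/

def IsAlternating {n k : ℕ} (T : TensorField n k) : Prop :=
  ∀ (x : Pt n) (idx : Fin k → Fin n) (σ : Equiv.Perm (Fin k)),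
    T x (idx ∘ σ) = ((Equiv.Perm.sign σ : ℤ) : ℝ) * T x idx

def IsSmoothT {n k : ℕ} (T : TensorField n k) : Prop :=
  ∀ idx, ContDiff ℝ (⊤ : ℕ∞) fun x => T x idx

/-- A smooth differential form (totally antisymmetric covariant tensor field). -/
def IsFormField {n k : ℕ} (T : TensorField n k) : Prop :=
  IsSmoothT T ∧ IsAlternating T

def IsSmoothVec {n : ℕ} (ℓ : VecField n) : Prop :=
  ∀ a, ContDiff ℝ (⊤ : ℕ∞) fun x => ℓ x a

/-- A (nowhere vanishing, smooth) null vector field. -/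
def IsNullField {n : ℕ} (g : MetricField n) (ℓ : VecField n) : Prop :=
  IsSmoothVec ℓ ∧ (∀ x, ℓ x ≠ 0) ∧ ∀ x, gdot g x (ℓ x) (ℓ x) = 0

/-- `ℓ^a F_{a b₁ … b_{p-1}} = 0`. -/
def ContractsFirstZero {n p : ℕ} [NeZero p] (ℓ : VecField n) (F : TensorField n p) : Prop :=
  ∀ (x : Pt n) (v : Fin p → Fin n), (∑ a, ℓ x a * F x (Function.update v 0 a)) = 0

/-- `ℓ_{[a} F_{b₁ … b_p]} = 0`. -/
def WedgeWithZero {n p : ℕ} (g : MetricField n) (ℓ : VecField n) (F : TensorField n p) : Prop :=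
  ∀ (x : Pt n) (idx : Fin (p+1) → Fin n),
    (∑ σ : Equiv.Perm (Fin (p+1)), ((Equiv.Perm.sign σ : ℤ) : ℝ) *
      (lower g ℓ x (idx (σ 0)) * F x (fun m => idx (σ m.succ)))) = 0

/-- The `p`-form `F` is of type N with multiple null direction `ℓ`. -/
def IsTypeN {n p : ℕ} [NeZero p] (g : MetricField n) (F : TensorField n p)
    (ℓ : VecField n) : Prop :=
  IsNullField g ℓ ∧ ContractsFirstZero ℓ F ∧ WedgeWithZero g ℓ F

/-- Lie derivative of a covariant tensor field along a vector field. -/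
def lieD {n k : ℕ} (ℓ : VecField n) (T : TensorField n k) : TensorField n k :=
  fun x idx =>
    (∑ a, ℓ x a * pd (fun y => T y idx) a x)
    + ∑ m : Fin k, ∑ a, pd (fun y => ℓ y a) (idx m) x * T x (Function.update idx m a)

/-! ### Optical properties: geodesic, Kundt -/

/-- `∇_b ℓ_a` (first index is the derivative index). -/
def nablaLow {n : ℕ} (g : MetricField n) (ℓ : VecField n) (x : Pt n) (b a : Fin n) : ℝ :=
  covD g (lowerField g ℓ) x ![b, a]

/-- `ℓ` is geodesic: `ℓ^b ∇_b ℓ_a ∝ ℓ_a`. -/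
def IsGeodesicField {n : ℕ} (g : MetricField n) (ℓ : VecField n) : Prop :=
  ∀ x, ∃ c : ℝ, ∀ a, (∑ b, ℓ x b * nablaLow g ℓ x b a) = c * lower g ℓ x a

/-- `ℓ` is affinely parameterized: `ℓ^b ∇_b ℓ_a = 0`. -/
def IsAffinelyParam {n : ℕ} (g : MetricField n) (ℓ : VecField n) : Prop :=
  ∀ x a, (∑ b, ℓ x b * nablaLow g ℓ x b a) = 0

/-- `ℓ` is a Kundt null vector field: null, geodesic and with vanishing optical matrix
(expansion-free, shear-free and twist-free). -/
def IsKundt {n : ℕ} (g : MetricField n) (ℓ : VecField n) : Prop :=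
  IsNullField g ℓ ∧ IsGeodesicField g ℓ ∧
  ∀ (x : Pt n) (X Y : Fin n → ℝ), gdot g x X (ℓ x) = 0 → gdot g x Y (ℓ x) = 0 →
    (∑ a, ∑ b, X a * Y b * nablaLow g ℓ x b a) = 0

/-! ### Curvature -/

/-- Fully lowered Riemann tensor `R_{abcd}`. -/
def riemann {n : ℕ} (g : MetricField n) : TensorField n 4 := fun x idx =>
  ∑ e, g x (idx 0) e *
    (pd (fun y => christoffel g y e (idx 3) (idx 1)) (idx 2) x
     - pd (fun y => christoffel g y e (idx 2) (idx 1)) (idx 3) x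
     + ∑ f', (christoffel g x e (idx 2) f' * christoffel g x f' (idx 3) (idx 1)
            - christoffel g x e (idx 3) f' * christoffel g x f' (idx 2) (idx 1)))

def ricci {n : ℕ} (g : MetricField n) (x : Pt n) (b d : Fin n) : ℝ :=
  ∑ a, ∑ c, (g x)⁻¹ a c * riemann g x ![a, b, c, d]

def ricciScalar {n : ℕ} (g : MetricField n) (x : Pt n) : ℝ :=
  ∑ b, ∑ d, (g x)⁻¹ b d * ricci g x b d

def tracelessRicci {n : ℕ} (g : MetricField n) : TensorField n 2 := fun x idx =>
  ricci g x (idx 0) (idx 1) - ricciScalar g x / (n : ℝ) * g x (idx 0) (idx 1)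

/-- Weyl tensor `C_{abcd}` (for `n ≥ 3`). -/
def weyl {n : ℕ} (g : MetricField n) : TensorField n 4 := fun x idx =>
  riemann g x idx
  - (1 / ((n : ℝ) - 2)) *
      (g x (idx 0) (idx 2) * ricci g x (idx 3) (idx 1)
       - g x (idx 0) (idx 3) * ricci g x (idx 2) (idx 1)
       - g x (idx 1) (idx 2) * ricci g x (idx 3) (idx 0)
       + g x (idx 1) (idx 3) * ricci g x (idx 2) (idx 0))
  + (1 / (((n : ℝ) - 1) * ((n : ℝ) - 2))) * ricciScalar g x *
      (g x (idx 0) (idx 2) * g x (idx 3) (idx 1) - g x (idx 0) (idx 3) * g x (idx 2) (idx 1))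

/-! ### Null frames, boost weights, algebraic types -/

/-- A null frame at a point: two null vectors `e 0 = ℓ`, `e 1 = n` with `ℓ·n = 1`, and
orthonormal spacelike vectors `e i`, `i ≥ 2`, orthogonal to both. -/
structure NullFrameAt {n : ℕ} [NeZero n] (g : MetricField n) (x : Pt n) where
  e : Fin n → Fin n → ℝ
  h00 : gdot g x (e 0) (e 0) = 0
  h11 : gdot g x (e 1) (e 1) = 0
  h01 : gdot g x (e 0) (e 1) = 1
  h0i : ∀ i : Fin n, 2 ≤ (i : ℕ) → gdot g x (e 0) (e i) = 0
  h1i : ∀ i : Fin n, 2 ≤ (i : ℕ) → gdot g x (e 1) (e i) = 0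
  hij : ∀ i j : Fin n, 2 ≤ (i : ℕ) → 2 ≤ (j : ℕ) →
    gdot g x (e i) (e j) = (if i = j then 1 else 0)

/-- Boost weight of a frame multi-index: `+1` for each contraction with `ℓ = e 0`,
`-1` for each contraction with `n = e 1`. -/
def bw {n k : ℕ} (a : Fin k → Fin n) : ℤ :=
  ((Finset.univ.filter fun m => (a m : ℕ) = 0).card : ℤ)
  - ((Finset.univ.filter fun m => (a m : ℕ) = 1).card : ℤ)

/-- Frame components of a covariant tensor. -/
def frameComp {n k : ℕ} (T : TensorField n k) (e : Fin n → Fin n → ℝ) (x : Pt n)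
    (a : Fin k → Fin n) : ℝ :=
  ∑ idx : Fin k → Fin n, T x idx * ∏ m, e (a m) (idx m)

/-- The tensor field `T` has boost order at most `b` with respect to the null
direction `ℓ`: in any null frame containing `ℓ`, all frame components of boost
weight `> b` vanish.  `b = 0` is the aligned type II condition, `b = -1` type III. -/
def BoostOrderLE {n k : ℕ} [NeZero n] (g : MetricField n) (ℓ : VecField n)
    (T : TensorField n k) (b : ℤ) : Prop :=
  ∀ (x : Pt n) (fr : NullFrameAt g x), fr.e 0 = ℓ x →
    ∀ a : Fin k → Fin n, b < bw a → frameComp T fr.e x a = 0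

/-- `g` is a degenerate Kundt metric with Kundt null direction `ℓ`: `ℓ` is Kundt and
the Riemann tensor together with its covariant derivatives of all orders is of aligned
type II with respect to `ℓ`. -/
def IsDegenerateKundt {n : ℕ} [NeZero n] (g : MetricField n) (ℓ : VecField n) : Prop :=
  IsKundt g ℓ ∧ ∀ I : ℕ, BoostOrderLE g ℓ (covDIter g (riemann g) I) 0

/-! ### Exterior derivative, Hodge dual, Maxwell equations -/

/-- Exterior derivative (components, no normalization factor). -/
def extD {n k : ℕ} (F : TensorField n k) : TensorField n (k+1) := fun x idx =>
  ∑ m : Fin (k+1), (-1 : ℝ) ^ (m : ℕ) *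
    pd (fun y => F y fun i => idx (m.succAbove i)) (idx m) x

/-- Sign of a self-map of `Fin k` (0 if not bijective). -/
def permSign {k : ℕ} (f : Fin k → Fin k) : ℤ :=
  if h : Function.Bijective f then Equiv.Perm.sign (Equiv.ofBijective f h) else 0

/-- Raise all indices of a covariant tensor with the inverse metric. -/
def raiseAll {n k : ℕ} (g : MetricField n) (T : TensorField n k) : TensorField n k :=
  fun x idx => ∑ jdx : Fin k → Fin n, (∏ m, (g x)⁻¹ (idx m) (jdx m)) * T x jdx

/-- Hodge dual of a `p`-form (`p + q = n`), via the metric volume element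
`√|det g| ε_{a₁…aₙ}`. -/
def hodge {n p q : ℕ} (h : p + q = n) (g : MetricField n) (F : TensorField n p) :
    TensorField n q := fun x idx =>
  (1 / (Nat.factorial p : ℝ)) *
    ∑ a : Fin p → Fin n, raiseAll g F x a *
      (Real.sqrt |(g x).det| *
        ((permSign fun i => Fin.append a idx (Fin.cast h.symm i) : ℤ) : ℝ))

/-- Source-free Maxwell equations `dF = 0 = d*F` for a `p`-form (`p + q = n`). -/
def MaxwellEqs {n p q : ℕ} (h : p + q = n) (g : MetricField n) (F : TensorField n p) : Prop :=
  (∀ x idx, extD F x idx = 0) ∧ (∀ x idx, extD (hodge h g F) x idx = 0)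

/-! ### Wedge products -/

def wedgeP {n a b : ℕ} (F : TensorField n a) (G : TensorField n b) : TensorField n (a+b) :=
  fun x idx => ∑ σ : Equiv.Perm (Fin (a+b)), ((Equiv.Perm.sign σ : ℤ) : ℝ) *
    (F x fun i => idx (σ (Fin.castAdd b i))) * (G x fun j => idx (σ (Fin.natAdd a j)))

def wedgePow {n p : ℕ} (F : TensorField n p) : (k : ℕ) → TensorField n (p * k)
  | 0 => fun _ _ => 1
  | k + 1 => wedgeP (wedgePow F k) F

def castT {n a b : ℕ} (h : a = b) (T : TensorField n a) : TensorField n b :=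
  fun x idx => T x fun i => idx (Fin.cast h i)

/-! ### Degenerate Kundt metrics in adapted coordinates -/

/-- The Kundt metric `ds² = 2 du (dr + H du + W_α dx^α) + g_{αβ} dx^α dx^β` in
coordinates `(u, r, x^α) = (x⁰, x¹, x^{α≥2})`. -/
def kundtMetric {n : ℕ} (H : Pt n → ℝ) (W : Pt n → Fin n → ℝ) (hT : MetricField n) :
    MetricField n := fun x => Matrix.of fun a b =>
  if (a : ℕ) = 0 ∧ (b : ℕ) = 0 then 2 * H x
  else if ((a : ℕ) = 0 ∧ (b : ℕ) = 1) ∨ ((a : ℕ) = 1 ∧ (b : ℕ) = 0) then 1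
  else if (a : ℕ) = 0 then W x b
  else if (b : ℕ) = 0 then W x a
  else if (a : ℕ) = 1 ∨ (b : ℕ) = 1 then 0
  else hT x a b

/-- A transverse (Riemannian) metric `g_{αβ}(u,x)`, stored as an `n×n` matrix padded
by the identity on the coordinates `u, r`. -/
def IsTransverseMetric {n : ℕ} (hT : MetricField n) : Prop :=
  (∀ (x : Pt n) (a b : Fin n), ((a : ℕ) < 2 ∨ (b : ℕ) < 2) → hT x a b = (if a = b then 1 else 0)) ∧
  (∀ x, (hT x).IsSymm) ∧ (∀ a b, ContDiff ℝ (⊤ : ℕ∞) fun x => hT x a b) ∧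
  IndepOfR hT ∧ (∀ x, (hT x).PosDef)

/-- Data of a degenerate Kundt metric: `W_α = r W¹_α + W⁰_α`,
`H = r² H² + r H¹ + H⁰`, transverse metric `hT`. -/
structure DegKundtData (n : ℕ) where
  H2 : Pt n → ℝ
  H1 : Pt n → ℝ
  H0 : Pt n → ℝ
  W1 : Pt n → Fin n → ℝ
  W0 : Pt n → Fin n → ℝ
  hT : MetricField n

def DegKundtData.Hfun {n : ℕ} [NeZero n] (D : DegKundtData n) : Pt n → ℝ :=
  fun z => (z 1)^2 * D.H2 z + z 1 * D.H1 z + D.H0 z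

def DegKundtData.Wfun {n : ℕ} [NeZero n] (D : DegKundtData n) : Pt n → Fin n → ℝ :=
  fun z b => z 1 * D.W1 z b + D.W0 z b

/-- The degenerate Kundt metric built from the data. -/
def DegKundtData.metric {n : ℕ} [NeZero n] (D : DegKundtData n) : MetricField n :=
  kundtMetric D.Hfun D.Wfun D.hT

/-- Regularity and shape conditions on the degenerate Kundt data: the metric functions
depend only on `(u, x^α)` and are smooth, `W`'s are transverse. -/
def DegKundtData.Regular {n : ℕ} (D : DegKundtData n) : Prop :=
  IsTransverseMetric D.hT ∧
  IndepOfR D.H2 ∧ IndepOfR D.H1 ∧ IndepOfR D.H0 ∧ IndepOfR D.W1 ∧ IndepOfR D.W0 ∧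
  ContDiff ℝ (⊤ : ℕ∞) D.H2 ∧ ContDiff ℝ (⊤ : ℕ∞) D.H1 ∧ ContDiff ℝ (⊤ : ℕ∞) D.H0 ∧
  (∀ a, ContDiff ℝ (⊤ : ℕ∞) fun x => D.W1 x a) ∧ (∀ a, ContDiff ℝ (⊤ : ℕ∞) fun x => D.W0 x a) ∧
  (∀ (x : Pt n) (a : Fin n), (a : ℕ) < 2 → D.W1 x a = 0) ∧ (∀ (x : Pt n) (a : Fin n), (a : ℕ) < 2 → D.W0 x a = 0)

/-- The `(q+1)`-form `du ∧ f` built from a transverse `q`-form `f`. -/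
def duWedge {n q : ℕ} (f : TensorField n q) : TensorField n (q+1) := fun x idx =>
  ∑ m : Fin (q+1), (-1 : ℝ) ^ (m : ℕ) * (if (idx m : ℕ) = 0 then 1 else 0) *
    f x (fun i => idx (m.succAbove i))

/-- `f_{[α₂…α_p , α₁]} = 0`: `f` is closed in the transverse geometry. -/
def TransClosed {n q : ℕ} (f : TensorField n q) : Prop :=
  ∀ (x : Pt n) (v : Fin (q+1) → Fin n), (∀ i, 2 ≤ (v i : ℕ)) →
    (∑ m : Fin (q+1), (-1 : ℝ) ^ (m : ℕ) *
      pd (fun y => f y fun i => v (m.succAbove i)) (v m) x) = 0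

/-- `(√g̃ f^{β α₁…α_{p-2}})_{,β} = 0`: `f` is co-closed in the transverse geometry. -/
def TransCoclosed {n q : ℕ} [NeZero q] (hT : MetricField n) (f : TensorField n q) : Prop :=
  ∀ (x : Pt n) (v : Fin q → Fin n),
    (∑ b : Fin n, pd (fun y =>
      Real.sqrt (hT y).det * raiseAll hT f y (Function.update v 0 b)) b x) = 0

/-! ### Transverse curvature -/

def christoffelT {n : ℕ} (h : MetricField n) (x : Pt n) (a b c : Fin n) : ℝ :=
  (1/2) * ∑ d, (h x)⁻¹ a d *
    (pdT (fun y => h y d c) b x + pdT (fun y => h y b d) c x - pdT (fun y => h y b c) d x)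

def covDT {n k : ℕ} (h : MetricField n) (T : TensorField n k) : TensorField n (k+1) :=
  fun x idx =>
    pdT (fun y => T y fun m => idx m.succ) (idx 0) x
    - ∑ m : Fin k, ∑ e : Fin n,
        christoffelT h x e (idx 0) (idx m.succ) * T x (Function.update (fun m' => idx m'.succ) m e)

def riemannT {n : ℕ} (h : MetricField n) : TensorField n 4 := fun x idx =>
  ∑ e, h x (idx 0) e *
    (pdT (fun y => christoffelT h y e (idx 3) (idx 1)) (idx 2) x
     - pdT (fun y => christoffelT h y e (idx 2) (idx 1)) (idx 3) x
     + ∑ f', (christoffelT h x e (idx 2) f' * christoffelT h x f' (idx 3) (idx 1)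
            - christoffelT h x e (idx 3) f' * christoffelT h x f' (idx 2) (idx 1)))

def ricciT {n : ℕ} (h : MetricField n) (x : Pt n) (b d : Fin n) : ℝ :=
  ∑ a, ∑ c, (h x)⁻¹ a c * riemannT h x ![a, b, c, d]

def ricciScalarT {n : ℕ} (h : MetricField n) (x : Pt n) : ℝ :=
  ∑ b, ∑ d, (h x)⁻¹ b d * ricciT h x b d

/-- A covector field as a rank-1 tensor field. -/
def oneForm {n : ℕ} (W : Pt n → Fin n → ℝ) : TensorField n 1 := fun x idx => W x (idx 0)

/-- Transverse covariant derivative `∇̃_b V_a` (`= V_{a||b}`). -/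
def nablaT {n : ℕ} (h : MetricField n) (V : TensorField n 1) (x : Pt n) (b a : Fin n) : ℝ :=
  covDT h V x ![b, a]

/-- Second transverse covariant derivative `∇̃_c ∇̃_b V_a`. -/
def nablaT2 {n : ℕ} (h : MetricField n) (V : TensorField n 1) (x : Pt n) (c b a : Fin n) : ℝ :=
  covDT h (covDT h V) x ![c, b, a]

/-- Transverse divergence `V^{α}{}_{||α}`. -/
def divT {n : ℕ} (h : MetricField n) (V : TensorField n 1) (x : Pt n) : ℝ :=
  ∑ b, ∑ c, (h x)⁻¹ b c * nablaT h V x b c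

def gradT {n : ℕ} (f : Pt n → ℝ) : TensorField n 1 := fun x idx => pdT f (idx 0) x

/-- Transverse Laplacian. -/
def laplaceT {n : ℕ} (h : MetricField n) (f : Pt n → ℝ) (x : Pt n) : ℝ :=
  ∑ a, ∑ b, (h x)⁻¹ a b * covDT h (gradT f) x ![a, b]

def lnSqrtDet {n : ℕ} (h : MetricField n) (y : Pt n) : ℝ :=
  Real.log (Real.sqrt (h y).det)

/-! ### Electromagnetic energy-momentum tensor -/

/-- Standard energy-momentum tensor of a `(q+1)`-form Maxwell field:
`T_{ab} = (1/q!) (F_{a c⃗} F_b{}^{c⃗} - (1/(2(q+1))) g_{ab} F_{c⃗}F^{c⃗})`. -/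
def emTensor {n q : ℕ} (g : MetricField n) (F : TensorField n (q+1)) (x : Pt n)
    (a b : Fin n) : ℝ :=
  (1 / (Nat.factorial q : ℝ)) *
    ((∑ v : Fin q → Fin n, F x (Fin.cons a v) *
        ∑ w : Fin q → Fin n, (∏ i, (g x)⁻¹ (v i) (w i)) * F x (Fin.cons b w))
     - (1 / (2 * ((q : ℝ) + 1))) * g x a b *
        ∑ v : Fin (q+1) → Fin n, F x v * raiseAll g F x v)

/-! ### Coordinate transformations (for adapted coordinates) -/

/-- Jacobian `∂ψ^a/∂y^b` of a coordinate change. -/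
def jac {n : ℕ} (ψ : Pt n → Pt n) (y : Pt n) (a b : Fin n) : ℝ :=
  pd (fun z => ψ z a) b y

/-- Pullback of the metric along the coordinate change `ψ` (from new to old coords). -/
def pullMetric {n : ℕ} (g : MetricField n) (ψ : Pt n → Pt n) : MetricField n :=
  fun y => Matrix.of fun μ ν => ∑ a, ∑ b, jac ψ y a μ * jac ψ y b ν * g (ψ y) a b

/-- Pullback of a covariant tensor field along `ψ`. -/
def pullForm {n p : ℕ} (F : TensorField n p) (ψ : Pt n → Pt n) : TensorField n p :=
  fun y idx => ∑ jdx : Fin p → Fin n, (∏ m, jac ψ y (jdx m) (idx m)) * F (ψ y) jdx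

/-! ### Parallelly transported adapted frames -/

/-- A null frame field containing `ℓ`, parallelly transported along `ℓ` and adapted
(`M^i_{jk} = 0`). -/
structure AdaptedPTFrame {n : ℕ} [NeZero n] (g : MetricField n) (ℓ : VecField n) where
  fr : ∀ x : Pt n, NullFrameAt g x
  aligned : ∀ x, (fr x).e 0 = ℓ x
  parallel : ∀ (x : Pt n) (a c : Fin n),
    (∑ b, ℓ x b * (pd (fun y => (fr y).e a c) b x
      + ∑ d, christoffel g x c b d * (fr x).e a d)) = 0
  adapted : ∀ (x : Pt n) (i j k : Fin n), 2 ≤ (i : ℕ) → 2 ≤ (j : ℕ) → 2 ≤ (k : ℕ) →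
    (∑ a, ∑ b, covD g (lowerField g fun z => (fr z).e j) x ![b, a]
      * (fr x).e i a * (fr x).e k b) = 0

/-! ### Explicit Petrov type III solutions -/

/-- The type III vacuum metric of Petrov,
`ds² = 2 du (dr + ½(xr − x eˣ) du) + eˣ(dx² + e^{2u} dy²)`, in coordinates
`(u,r,x,y)`. -/
def petrovG : MetricField 4 := fun z => Matrix.of fun a b =>
  if a = 0 ∧ b = 0 then z 2 * z 1 - z 2 * Real.exp (z 2)
  else if (a = 0 ∧ b = 1) ∨ (a = 1 ∧ b = 0) then 1
  else if a = 2 ∧ b = 2 then Real.exp (z 2)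
  else if a = 3 ∧ b = 3 then Real.exp (z 2 + 2 * z 0)
  else 0

/-- The same metric with the electromagnetic backreaction term
`−2κ₀ eˣ c(u)²` included in `2H`. -/
def petrovEM (κ₀ : ℝ) (c : ℝ → ℝ) : MetricField 4 := fun z => Matrix.of fun a b =>
  if a = 0 ∧ b = 0 then z 2 * z 1 - z 2 * Real.exp (z 2) - 2 * κ₀ * Real.exp (z 2) * (c (z 0))^2
  else if (a = 0 ∧ b = 1) ∨ (a = 1 ∧ b = 0) then 1
  else if a = 2 ∧ b = 2 then Real.exp (z 2)
  else if a = 3 ∧ b = 3 then Real.exp (z 2 + 2 * z 0)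
  else 0

/-- The null direction `ℓ = ∂_r`. -/
def ellR : VecField 4 := fun _ a => if a = 1 then 1 else 0

/-- The transverse covector of the VSI Maxwell field (4). -/
def petrovA (c : ℝ → ℝ) (z : Pt 4) : Fin 4 → ℝ := fun a =>
  if a = 2 then -(Real.exp (z 2 / 2) * c (z 0) * Real.cos (z 3 * Real.exp (z 0) / 2))
  else if a = 3 then Real.exp (z 2 / 2) * c (z 0) * Real.exp (z 0) * Real.sin (z 3 * Real.exp (z 0) / 2)
  else 0

/-- The Maxwell 2-form
`F = e^{x/2} c(u) du ∧ (−cos(y eᵘ/2) dx + eᵘ sin(y eᵘ/2) dy)`. -/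
def petrovF (c : ℝ → ℝ) : TensorField 4 2 := fun z idx =>
  (if idx 0 = 0 then petrovA c z (idx 1) else 0)
  - (if idx 1 = 0 then petrovA c z (idx 0) else 0)


/-! ### Part A: nilpotency from vanishing traces of powers -/

lemma aux_trace_aeval {ι : Type*} [Fintype ι] [DecidableEq ι] (M : Matrix ι ι ℝ)
    (h : ∀ k : ℕ, (M ^ (k + 1)).trace = 0) (f : Polynomial ℝ) :
    (Polynomial.aeval M (f * Polynomial.X)).trace = 0 := by
  induction f using Polynomial.induction_on' with
  | add p q hp hq => rw [add_mul, map_add, Matrix.trace_add, hp, hq, add_zero]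
  | monomial k a =>
    rw [Polynomial.monomial_mul_X, Polynomial.aeval_monomial, Algebra.algebraMap_eq_smul_one,
      smul_mul_assoc, one_mul, Matrix.trace_smul, h, smul_zero]

lemma aux_idem {ι : Type*} [Fintype ι] [DecidableEq ι] (E : Matrix ι ι ℝ)
    (h : E * E = E) (ht : E.trace = 0) : E = 0 := by
  have h1 : IsIdempotentElem (Matrix.toLin' E) := by
    unfold IsIdempotentElem
    rw [Module.End.mul_eq_comp, ← Matrix.toLin'_mul, h]
  have h2 : LinearMap.trace ℝ (ι → ℝ) (Matrix.toLin' E) = 0 := by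
    rw [Matrix.trace_toLin'_eq, ht]
  have := (LinearMap.IsIdempotentElem.trace_eq_zero_iff h1).1 h2
  simpa using this

lemma aux_nilp {ι : Type*} [Fintype ι] [DecidableEq ι] (M : Matrix ι ι ℝ)
    (h : ∀ k : ℕ, (M ^ (k + 1)).trace = 0) : IsNilpotent M := by
  have hne : M.charpoly ≠ 0 := M.charpoly_monic.ne_zero
  obtain ⟨q, hq, hnd⟩ := Polynomial.exists_eq_pow_rootMultiplicity_mul_and_not_dvd M.charpoly hne 0
  set a := M.charpoly.rootMultiplicity 0
  rw [Polynomial.C_0, sub_zero] at hq hnd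
  have hcop : IsCoprime ((Polynomial.X : Polynomial ℝ) ^ (a + 1)) q :=
    IsCoprime.pow_left ((Polynomial.irreducible_X.coprime_iff_not_dvd).2 hnd)
  obtain ⟨u, v, huv⟩ := hcop
  have hch : Polynomial.aeval M (Polynomial.X ^ a * q) = 0 := by
    rw [← hq]; exact Matrix.aeval_self_charpoly M
  set E := Polynomial.aeval M (u * Polynomial.X ^ (a + 1)) with hE
  have hid : E * E = E := by
    have : u * Polynomial.X ^ (a + 1) * (u * Polynomial.X ^ (a + 1)) = u * Polynomial.X ^ (a + 1)
        - (u * v * Polynomial.X) * (Polynomial.X ^ a * q) := by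
      have : u * Polynomial.X ^ (a + 1) = 1 - v * q := by rw [← huv]; ring
      calc _ = u * Polynomial.X ^ (a + 1) * (1 - v * q) := by rw [← this]
        _ = _ := by ring
    rw [hE, ← map_mul, this, map_sub, map_mul _ _ (Polynomial.X ^ a * q), hch, mul_zero, sub_zero]
  have htr : E.trace = 0 := by
    have := aux_trace_aeval M h (u * Polynomial.X ^ a)
    rwa [mul_assoc, ← pow_succ] at this
  have hE0 := aux_idem E hid htr
  refine ⟨a, ?_⟩
  have : (Polynomial.X : Polynomial ℝ) ^ a = Polynomial.X ^ a * (u * Polynomial.X ^ (a + 1))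
      + v * (Polynomial.X ^ a * q) := by
    calc (Polynomial.X : Polynomial ℝ) ^ a
        = Polynomial.X ^ a * (u * Polynomial.X ^ (a + 1) + v * q) := by rw [huv, mul_one]
      _ = _ := by ring
  have h2 := congrArg (Polynomial.aeval M) this
  rw [map_add, map_mul, map_mul _ v, hch, ← hE, hE0] at h2
  simpa using h2

/-! ### Part B: traces of powers as cyclic sums -/

lemma aux_cyc {ι : Type*} [Fintype ι] [DecidableEq ι] (M : Matrix ι ι ℝ) (k : ℕ) :
    ∀ B : Matrix ι ι ℝ, ∑ ψ : Fin (k + 1) → ι,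
      (∏ i : Fin k, M (ψ i.castSucc) (ψ i.succ)) * B (ψ (Fin.last k)) (ψ 0)
      = (M ^ k * B).trace := by
  induction k with
  | zero =>
    intro B
    rw [pow_zero, one_mul, Matrix.trace]
    rw [← (Equiv.funUnique (Fin 1) ι).symm.sum_comp]
    simp
  | succ k ih =>
    intro B
    have h1 : (M ^ (k + 1) * B).trace = (M ^ k * (B * M)).trace := by
      rw [pow_succ', mul_assoc, Matrix.trace_mul_comm, mul_assoc]
    rw [h1, ← ih, ← (Fin.consEquiv fun _ => ι).sum_comp, Fintype.sum_prod_type_right]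
    refine Finset.sum_congr rfl fun ψ _ => ?_
    rw [Matrix.mul_apply, Finset.mul_sum]
    refine Finset.sum_congr rfl fun a _ => ?_
    rw [Fin.prod_univ_succ]
    simp only [Fin.consEquiv_apply, Fin.castSucc_zero, Fin.cons_zero, Fin.cons_succ,
      ← Fin.succ_castSucc, ← Fin.succ_last]
    ring

lemma aux_cyc_trace {ι : Type*} [Fintype ι] [DecidableEq ι] (M : Matrix ι ι ℝ) (k : ℕ) :
    ∑ ψ : Fin (k + 1) → ι, ∏ i, M (ψ i) (ψ (i + 1)) = (M ^ (k + 1)).trace := by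
  rw [pow_succ, ← aux_cyc]
  refine Finset.sum_congr rfl fun ψ _ => ?_
  rw [Fin.prod_univ_castSucc]
  simp

/-! ### Part C: pull-back of tensors by a matrix -/

/-- Components of the pull-back of a covariant tensor by a matrix. -/
def pull {ι κ : Type*} [Fintype ι] [DecidableEq ι] [Fintype κ]
    (Q : Matrix κ κ ℝ) (f : (ι → κ) → ℝ) (a : ι → κ) : ℝ :=
  ∑ idx : ι → κ, f idx * ∏ m, Q (idx m) (a m)

lemma pull_pull {ι κ : Type*} [Fintype ι] [DecidableEq ι] [Fintype κ] [DecidableEq κ]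
    (Q R : Matrix κ κ ℝ) (f : (ι → κ) → ℝ) : pull R (pull Q f) = pull (Q * R) f := by
  funext b
  simp only [pull, Finset.sum_mul, Matrix.mul_apply]
  rw [Finset.sum_comm]
  refine Finset.sum_congr rfl fun idx _ => ?_
  rw [Fintype.prod_sum, Finset.mul_sum]
  refine Finset.sum_congr rfl fun a _ => ?_
  rw [mul_assoc, ← Finset.prod_mul_distrib]

lemma pull_one {ι κ : Type*} [Fintype ι] [DecidableEq ι] [Fintype κ] [DecidableEq κ]
    (f : (ι → κ) → ℝ) : pull (1 : Matrix κ κ ℝ) f = f := by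
  funext b
  rw [pull, Finset.sum_eq_single b]
  · simp
  · intro c _ hc
    obtain ⟨i, hi⟩ := Function.ne_iff.1 hc
    have hz : ∏ m, (1 : Matrix κ κ ℝ) (c m) (b m) = 0 :=
      Finset.prod_eq_zero (Finset.mem_univ i) (Matrix.one_apply_ne hi)
    rw [hz, mul_zero]
  · simp

lemma pull_eq_zero {ι κ : Type*} [Fintype ι] [DecidableEq ι] [Fintype κ] [DecidableEq κ]
    (Q R : Matrix κ κ ℝ) (hQ : Q * R = 1) (f : (ι → κ) → ℝ) (h : ∀ a, pull Q f a = 0)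
    (b : ι → κ) : f b = 0 := by
  have h0 : pull Q f = fun _ => 0 := funext h
  have h1 := pull_pull Q R f
  rw [hQ, pull_one, h0] at h1
  rw [← h1]
  simp [pull]

/-- Total antisymmetry. -/
def Alt {p : ℕ} {κ : Type*} (f : (Fin p → κ) → ℝ) : Prop :=
  ∀ (idx : Fin p → κ) (σ : Equiv.Perm (Fin p)),
    f (idx ∘ σ) = ((Equiv.Perm.sign σ : ℤ) : ℝ) * f idx

lemma Alt.pull {p : ℕ} {κ : Type*} [Fintype κ] {f : (Fin p → κ) → ℝ} (hf : Alt f)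
    (Q : Matrix κ κ ℝ) : Alt (pull Q f) := by
  intro a σ
  simp only [VSI.pull, Finset.mul_sum]
  rw [← (Equiv.arrowCongr σ.symm (Equiv.refl κ)).sum_comp]
  refine Finset.sum_congr rfl fun idx _ => ?_
  have h1 : (Equiv.arrowCongr σ.symm (Equiv.refl κ)) idx = idx ∘ σ := by
    funext m; simp [Equiv.arrowCongr]
  rw [h1, hf, mul_assoc]
  congr 2
  exact Equiv.prod_comp σ fun m => Q (idx m) (a m)

lemma Alt.swap {p : ℕ} {κ : Type*} {f : (Fin p → κ) → ℝ} (hf : Alt f) {i j : Fin p}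
    (hij : i ≠ j) (idx : Fin p → κ) : f (idx ∘ Equiv.swap i j) = - f idx := by
  rw [hf, Equiv.Perm.sign_swap hij]; simp

lemma Alt.zero {p : ℕ} {κ : Type*} {f : (Fin p → κ) → ℝ} (hf : Alt f) {i j : Fin p}
    (hij : i ≠ j) {idx : Fin p → κ} (h : idx i = idx j) : f idx = 0 := by
  have h1 := hf.swap hij idx
  have h2 : idx ∘ Equiv.swap i j = idx := by
    funext m
    by_cases hi : m = i
    · subst hi; simp [h]
    · by_cases hj : m = j
      · subst hj; simp [h]
      · simp [Equiv.swap_apply_of_ne_of_ne hi hj]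
  rw [h2] at h1
  linarith

/-- if components with first index `a` vanish, all components with some index `a` vanish. -/
lemma Alt.zero_of_mem {q : ℕ} {κ : Type*} {f : (Fin (q + 1) → κ) → ℝ} (hf : Alt f) {a : κ}
    (h : ∀ c : Fin q → κ, f (Fin.cons a c) = 0) (c : Fin (q + 1) → κ) (i : Fin (q + 1))
    (hi : c i = a) : f c = 0 := by
  by_cases h0 : i = 0
  · subst h0
    rw [← Fin.cons_self_tail c, hi]
    exact h _
  · have h1 := hf.swap h0 c
    have h2 : c ∘ Equiv.swap i 0 = Fin.cons a (Fin.tail (c ∘ Equiv.swap i 0)) := by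
      conv_lhs => rw [← Fin.cons_self_tail (c ∘ Equiv.swap i 0)]
      simp [hi]
    rw [h2, h] at h1
    linarith

/-- Contraction of a tensor with the column `b` of `Q` in its first slot. -/
lemma pull_contr {q : ℕ} {κ : Type*} [Fintype κ] [DecidableEq κ] (Q : Matrix κ κ ℝ)
    (f : (Fin (q + 1) → κ) → ℝ) (b : κ) (c : Fin q → κ) :
    pull Q (fun c' : Fin q → κ => ∑ a, Q a b * f (Fin.cons a c')) c = pull Q f (Fin.cons b c) := by
  simp only [pull]
  rw [← (Fin.consEquiv fun _ => κ).sum_comp, Fintype.sum_prod_type_right]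
  refine Finset.sum_congr rfl fun c' _ => ?_
  rw [Finset.sum_mul]
  refine Finset.sum_congr rfl fun a _ => ?_
  have h1 : (Fin.consEquiv fun _ => κ) (a, c') = Fin.cons a c' := rfl
  rw [Fin.prod_univ_succ, h1]
  simp only [Fin.cons_zero, Fin.cons_succ]
  ring

/-- The (unnormalised) wedge of a covector with a tensor. -/
def wedge1 {p : ℕ} {κ : Type*} (l : κ → ℝ) (f : (Fin p → κ) → ℝ) (idx : Fin (p + 1) → κ) : ℝ :=
  ∑ σ : Equiv.Perm (Fin (p + 1)), ((Equiv.Perm.sign σ : ℤ) : ℝ) *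
    (l (idx (σ 0)) * f fun m => idx (σ m.succ))

lemma pull_wedge1 {p : ℕ} {κ : Type*} [Fintype κ] [DecidableEq κ] (Q : Matrix κ κ ℝ)
    (l : κ → ℝ) (f : (Fin p → κ) → ℝ) (a : Fin (p + 1) → κ) :
    pull Q (wedge1 l f) a = wedge1 (fun b => ∑ c, l c * Q c b) (pull Q f) a := by
  simp only [pull, wedge1, Finset.sum_mul]
  rw [Finset.sum_comm]
  refine Finset.sum_congr rfl fun σ _ => ?_
  rw [← (Equiv.arrowCongr σ (Equiv.refl κ)).sum_comp, ← (Fin.consEquiv fun _ => κ).sum_comp,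
    Fintype.sum_prod_type, Finset.mul_sum]
  refine Finset.sum_congr rfl fun b _ => ?_
  rw [Finset.mul_sum, Finset.mul_sum]
  refine Finset.sum_congr rfl fun c _ => ?_
  rw [← Equiv.prod_comp σ, Fin.prod_univ_succ]
  simp [Equiv.arrowCongr]
  ring

/-- Antisymmetrisation vanishes on repeated indices. -/
lemma wedge1_zero {p : ℕ} {κ : Type*} (l : κ → ℝ) (f : (Fin p → κ) → ℝ) (idx : Fin (p + 1) → κ)
    {i j : Fin (p + 1)} (hij : i ≠ j) (h : idx i = idx j) : wedge1 l f idx = 0 := by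
  have h2 : ∀ m, idx (Equiv.swap i j m) = idx m := by
    intro m
    by_cases hi : m = i
    · subst hi; simp [h]
    · by_cases hj : m = j
      · subst hj; simp [h]
      · simp [Equiv.swap_apply_of_ne_of_ne hi hj]
  have h3 : wedge1 l f idx = - wedge1 l f idx := by
    conv_lhs => rw [wedge1, ← Equiv.sum_comp (Equiv.mulLeft (Equiv.swap i j))]
    rw [wedge1, ← Finset.sum_neg_distrib]
    refine Finset.sum_congr rfl fun σ _ => ?_
    simp [h2, Equiv.Perm.sign_swap hij]
  linarith

lemma wedge1_cons {p : ℕ} {κ : Type*} [DecidableEq κ] {f : (Fin p → κ) → ℝ} (hf : Alt f) (o : κ)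
    (c : Fin p → κ) (hc : ∀ i, c i ≠ o)
    (h : wedge1 (fun b => if b = o then (1 : ℝ) else 0) f (Fin.cons o c) = 0) : f c = 0 := by
  have key : ∀ σ : Equiv.Perm (Fin (p + 1)), ((Equiv.Perm.sign σ : ℤ) : ℝ) *
      ((if (Fin.cons o c : Fin (p + 1) → κ) (σ 0) = o then (1 : ℝ) else 0) *
        f fun m => (Fin.cons o c : Fin (p + 1) → κ) (σ m.succ)) = if σ 0 = 0 then f c else 0 := by
    intro σ
    obtain ⟨⟨i, τ⟩, rfl⟩ := Equiv.Perm.decomposeFin.symm.surjective σ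
    refine Fin.cases ?_ (fun i => ?_) i
    · simp only [Equiv.Perm.decomposeFin_symm_apply_zero, Equiv.Perm.decomposeFin_symm_apply_succ,
        Equiv.Perm.decomposeFin.symm_sign, Equiv.swap_self, Equiv.refl_apply, Fin.cons_succ,
        Fin.cons_zero, if_true, one_mul]
      have := hf c τ
      have h3 : (fun m => c (τ m)) = c ∘ τ := rfl
      rw [h3, this, ← mul_assoc, ← Int.cast_mul, ← Units.val_mul, Int.units_mul_self]
      simp
    · simp [hc i]
  rw [wedge1, Finset.sum_congr rfl fun σ _ => key σ, ← Finset.sum_filter, Finset.sum_const,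
    nsmul_eq_mul] at h
  rcases mul_eq_zero.1 h with h | h
  · exfalso
    rw [Nat.cast_eq_zero, Finset.card_eq_zero] at h
    have : (1 : Equiv.Perm (Fin (p + 1))) ∈
      Finset.univ.filter fun σ : Equiv.Perm (Fin (p + 1)) => σ 0 = 0 := by simp
    rw [h] at this
    simp at this
  · exact h


/-! ### Part D: analysis in a null frame -/

lemma inner_pull {ι κ : Type*} [Fintype ι] [DecidableEq ι] [Fintype κ] [DecidableEq κ]
    (Gi Q : Matrix κ κ ℝ) (bar : κ → κ) (hG : ∀ c d, Gi c d = ∑ a, Q c a * Q d (bar a))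
    (A B : (ι → κ) → ℝ) :
    ∑ c, ∑ d, A c * B d * ∏ i, Gi (c i) (d i) = ∑ α, pull Q A α * pull Q B (bar ∘ α) := by
  have h1 : ∀ c d : ι → κ, A c * B d * ∏ i, Gi (c i) (d i)
      = ∑ α : ι → κ, (A c * ∏ i, Q (c i) (α i)) * (B d * ∏ i, Q (d i) (bar (α i))) := by
    intro c d
    simp only [hG]
    rw [Fintype.prod_sum, Finset.mul_sum]
    refine Finset.sum_congr rfl fun α _ => ?_
    rw [Finset.prod_mul_distrib]
    ring
  simp only [h1]
  have h2 : ∀ c : ι → κ, ∑ d : ι → κ, ∑ α : ι → κ,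
      (A c * ∏ i, Q (c i) (α i)) * (B d * ∏ i, Q (d i) (bar (α i)))
      = ∑ α : ι → κ, (A c * ∏ i, Q (c i) (α i)) * pull Q B (bar ∘ α) := by
    intro c
    rw [Finset.sum_comm]
    refine Finset.sum_congr rfl fun α _ => ?_
    rw [← Finset.mul_sum]
    rfl
  simp only [h2]
  rw [Finset.sum_comm]
  refine Finset.sum_congr rfl fun α _ => ?_
  rw [← Finset.sum_mul]
  rfl

lemma swap_comp_eq {ι κ : Type*} [DecidableEq κ] {z o : κ} {c : ι → κ}
    (hz : ∀ i, c i ≠ z) (ho : ∀ i, c i ≠ o) : (Equiv.swap z o) ∘ c = c := by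
  funext i
  exact Equiv.swap_apply_of_ne_of_ne (hz i) (ho i)

lemma frame_forward {q : ℕ} {κ : Type*} [Fintype κ] [DecidableEq κ] {z o : κ}
    {f : (Fin (q + 1) → κ) → ℝ} (hf : Alt f)
    (h00 : ∑ c : Fin q → κ, f (Fin.cons z c) * f (Fin.cons z (Equiv.swap z o ∘ c)) = 0)
    (h01 : ∑ c : Fin q → κ, f (Fin.cons z c) * f (Fin.cons o (Equiv.swap z o ∘ c)) = 0)
    (hff : ∑ c : Fin (q + 1) → κ, f c * f (Equiv.swap z o ∘ c) = 0) :
    (∀ c : Fin q → κ, f (Fin.cons z c) = 0) ∧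
      ∀ c : Fin (q + 1) → κ, (∀ i, c i ≠ o) → f c = 0 := by
  have hrep : ∀ (c : Fin q → κ) (i : Fin q), c i = z → f (Fin.cons z c) = 0 := by
    intro c i hi
    exact hf.zero (i := 0) (j := i.succ) (Fin.succ_ne_zero i).symm (by simp [hi])
  -- step 1
  have s1 : ∀ c : Fin q → κ, (∀ i, c i ≠ o) → f (Fin.cons z c) = 0 := by
    have hnn : ∀ c ∈ (Finset.univ : Finset (Fin q → κ)),
        0 ≤ f (Fin.cons z c) * f (Fin.cons z (Equiv.swap z o ∘ c)) := by
      intro c _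
      by_cases hz : ∃ i, c i = z
      · obtain ⟨i, hi⟩ := hz
        rw [hrep c i hi, zero_mul]
      · by_cases ho : ∃ i, c i = o
        · obtain ⟨i, hi⟩ := ho
          rw [hrep (Equiv.swap z o ∘ c) i (by simp [hi]), mul_zero]
        · push Not at hz ho
          rw [swap_comp_eq hz ho]
          exact mul_self_nonneg _
    have h0 := (Finset.sum_eq_zero_iff_of_nonneg hnn).1 h00
    intro c ho
    by_cases hz : ∃ i, c i = z
    · obtain ⟨i, hi⟩ := hz
      exact hrep c i hi
    · push Not at hz
      have := h0 c (Finset.mem_univ _)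
      rw [swap_comp_eq hz ho] at this
      exact mul_self_eq_zero.1 this
  -- step 2
  have s2 : ∀ c : Fin q → κ, f (Fin.cons z c) = 0 := by
    have heq : ∀ c : Fin q → κ, f (Fin.cons z c) * f (Fin.cons o (Equiv.swap z o ∘ c))
        = - (f (Fin.cons z c) * f (Fin.cons z c)) := by
      intro c
      by_cases h : f (Fin.cons z c) = 0
      · simp [h]
      have hz : ∀ i, c i ≠ z := fun i hi => h (hrep c i hi)
      have ho : ∃ i, c i = o := by
        by_contra hcon
        push Not at hcon
        exact h (s1 c hcon)
      obtain ⟨i, hi⟩ := ho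
      have hu : ∀ j, j ≠ i → c j ≠ o := by
        intro j hj hjo
        exact h (hf.zero (i := i.succ) (j := j.succ)
          (fun hh => hj (Fin.succ_injective _ hh).symm) (by simp [hi, hjo]))
      have hs : (Fin.cons o (Equiv.swap z o ∘ c) : Fin (q + 1) → κ)
          = (Fin.cons z c : Fin (q + 1) → κ) ∘ Equiv.swap 0 i.succ := by
        funext m
        refine Fin.cases ?_ (fun j => ?_) m
        · simp [hi]
        · by_cases hj : j = i
          · subst hj; simp [hi]
          · rw [Function.comp_apply, Equiv.swap_apply_of_ne_of_ne (Fin.succ_ne_zero j)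
              (fun hh => hj (Fin.succ_injective _ hh))]
            simp only [Fin.cons_succ, Function.comp_apply]
            exact Equiv.swap_apply_of_ne_of_ne (hz j) (hu j hj)
      rw [hs, hf.swap (Fin.succ_ne_zero i).symm]
      ring
    simp only [heq, Finset.sum_neg_distrib, neg_eq_zero] at h01
    have h0 := (Finset.sum_eq_zero_iff_of_nonneg
      (fun c _ => mul_self_nonneg (f (Fin.cons z c)))).1 h01
    intro c
    exact mul_self_eq_zero.1 (h0 c (Finset.mem_univ _))
  refine ⟨s2, ?_⟩
  have hz0 : ∀ (c : Fin (q + 1) → κ) i, c i = z → f c = 0 := fun c i hi => hf.zero_of_mem s2 c i hi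
  have hnn : ∀ c ∈ (Finset.univ : Finset (Fin (q + 1) → κ)), 0 ≤ f c * f (Equiv.swap z o ∘ c) := by
    intro c _
    by_cases hz : ∃ i, c i = z
    · obtain ⟨i, hi⟩ := hz
      rw [hz0 c i hi, zero_mul]
    · by_cases ho : ∃ i, c i = o
      · obtain ⟨i, hi⟩ := ho
        rw [hz0 (Equiv.swap z o ∘ c) i (by simp [hi]), mul_zero]
      · push Not at hz ho
        rw [swap_comp_eq hz ho]
        exact mul_self_nonneg _
  have h0 := (Finset.sum_eq_zero_iff_of_nonneg hnn).1 hff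
  intro c ho
  by_cases hz : ∃ i, c i = z
  · obtain ⟨i, hi⟩ := hz
    exact hz0 c i hi
  · push Not at hz
    have := h0 c (Finset.mem_univ _)
    rw [swap_comp_eq hz ho] at this
    exact mul_self_eq_zero.1 this

lemma frame_wedge {p : ℕ} {κ : Type*} [DecidableEq κ] {o : κ} {f : (Fin p → κ) → ℝ}
    (h : ∀ c : Fin p → κ, (∀ i, c i ≠ o) → f c = 0) (idx : Fin (p + 1) → κ) :
    wedge1 (fun b => if b = o then (1 : ℝ) else 0) f idx = 0 := by
  by_cases hinj : Function.Injective idx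
  · rw [wedge1]
    refine Finset.sum_eq_zero fun σ _ => ?_
    by_cases h0 : idx (σ 0) = o
    · rw [h, mul_zero, mul_zero]
      intro i hi
      have := σ.injective (hinj (hi.trans h0.symm))
      exact Fin.succ_ne_zero i this
    · simp [h0]
  · rw [Function.Injective] at hinj
    push Not at hinj
    obtain ⟨i, j, h1, h2⟩ := hinj
    exact wedge1_zero _ _ _ h2 h1

/-! ### Part E: existence of null frames -/

/-- The Gram matrix of a null frame. -/
def etaN (m : ℕ) : Matrix (Fin (m + 2)) (Fin (m + 2)) ℝ :=
  fun a b => if b = Equiv.swap 0 1 a then 1 else 0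

/-- The Minkowski matrix. -/
def etaM (m : ℕ) : Matrix (Fin (m + 2)) (Fin (m + 2)) ℝ :=
  Matrix.diagonal fun i : Fin (m + 2) => if (i : ℕ) = 0 then (-1 : ℝ) else 1

lemma etaN_sq (m : ℕ) : etaN m * etaN m = 1 := by
  ext a b
  simp only [etaN, Matrix.mul_apply, Matrix.one_apply, ite_mul, one_mul, zero_mul,
    Finset.sum_ite_eq', Finset.mem_univ, if_true, Equiv.swap_apply_self]
  simp [eq_comm]

lemma etaM_sq (m : ℕ) : etaM m * etaM m = 1 := by
  rw [etaM, Matrix.diagonal_mul_diagonal, ← Matrix.diagonal_one]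
  congr 1
  funext i
  split_ifs <;> norm_num

/-- The basis change from an orthonormal to a null frame. -/
def boostM (m : ℕ) (t : ℝ) : Matrix (Fin (m + 2)) (Fin (m + 2)) ℝ := fun a b =>
  if b = 0 then (if a = 0 then t else if a = 1 then t else 0)
  else if b = 1 then (if a = 0 then -(1 / (2 * t)) else if a = 1 then 1 / (2 * t) else 0)
  else if a = b then 1 else 0

lemma boostM_gram (m : ℕ) (t : ℝ) (ht : t ≠ 0) :
    (boostM m t).transpose * etaM m * boostM m t = etaN m := by
  ext a b
  rw [etaM, Matrix.mul_apply]
  simp only [Matrix.mul_diagonal, Matrix.transpose_apply]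
  rw [Fin.sum_univ_succ, Fin.sum_univ_succ]
  have h10 : (1 : Fin (m + 2)) ≠ 0 := by simp
  refine Fin.cases ?_ (fun a => Fin.cases ?_ (fun a => ?_) a) a <;>
  refine Fin.cases ?_ (fun b => Fin.cases ?_ (fun b => ?_) b) b
  all_goals
    simp [boostM, etaN, Fin.ext_iff, Equiv.swap_apply_def]
    try field_simp
    try norm_num
  simp [← Fin.ext_iff]

lemma exists_rot (m : ℕ) (w : Fin (m + 2) → ℝ) (hw0 : w 0 = 0) (hw : ∑ i, w i * w i = 1) :
    ∃ O : Matrix (Fin (m + 2)) (Fin (m + 2)) ℝ, O.transpose * etaM m * O = etaM m ∧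
      (∀ a, O a 0 = if a = 0 then 1 else 0) ∧ ∀ a, O a 1 = w a := by
  let v : Fin (m + 2) → EuclideanSpace ℝ (Fin (m + 2)) := fun i =>
    if i = 0 then WithLp.toLp 2 (Pi.single 0 1) else WithLp.toLp 2 w
  have hin : ∀ x y : EuclideanSpace ℝ (Fin (m + 2)), inner ℝ x y = ∑ a, x a * y a := by
    intro x y
    rw [PiLp.inner_apply]
    refine Finset.sum_congr rfl fun a _ => ?_
    simp [mul_comm]
  have hv : Orthonormal ℝ (Set.domRestrict ({0, 1} : Set (Fin (m + 2))) v) := by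
    rw [orthonormal_iff_ite]
    rintro ⟨i, hi⟩ ⟨j, hj⟩
    rw [hin]
    rcases hi with rfl | hi <;> rcases hj with rfl | hj
    · simp [v, Pi.single_apply]
    · rw [Set.mem_singleton_iff] at hj
      subst hj
      rw [if_neg (fun hh => zero_ne_one (congrArg Subtype.val hh))]
      simp [v, hw0]
    · rw [Set.mem_singleton_iff] at hi
      subst hi
      rw [if_neg (fun hh => one_ne_zero (congrArg Subtype.val hh))]
      simp [v, hw0]
    · rw [Set.mem_singleton_iff] at hi hj
      subst hi hj
      simp [v, hw]
  obtain ⟨b, hb⟩ := hv.exists_orthonormalBasis_extension_of_card_eq (by simp)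
  have hb0 : ∀ a, b 0 a = if a = 0 then 1 else 0 := by
    intro a
    rw [hb 0 (by simp)]
    simp [v, Pi.single_apply]
  have hb1 : ∀ a, b 1 a = w a := by
    intro a
    rw [hb 1 (by simp)]
    simp [v]
  have hbb : ∀ i j, ∑ a, b i a * b j a = if i = j then 1 else 0 := by
    intro i j
    rw [← hin, orthonormal_iff_ite.1 b.orthonormal]
  have hz : ∀ i, b i 0 = if i = 0 then 1 else 0 := by
    intro i
    have := hbb i 0
    simpa [hb0] using this
  refine ⟨Matrix.of fun a i => b i a, ?_, hb0, hb1⟩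
  ext i j
  rw [etaM, Matrix.mul_apply]
  simp only [Matrix.mul_diagonal, Matrix.transpose_apply, Matrix.of_apply]
  have h1 : ∀ a : Fin (m + 2), b i a * (if (a : ℕ) = 0 then (-1 : ℝ) else 1) * b j a
      = b i a * b j a - 2 * (if a = 0 then b i a * b j a else 0) := by
    intro a
    by_cases ha : a = 0
    · subst ha; simp; ring
    · have : (a : ℕ) ≠ 0 := fun hh => ha (Fin.ext hh)
      simp [ha, this]
  rw [Finset.sum_congr rfl fun a _ => h1 a, Finset.sum_sub_distrib, hbb, ← Finset.mul_sum,
    Finset.sum_ite_eq' Finset.univ (0 : Fin (m + 2)), if_pos (Finset.mem_univ _), hz, hz,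
    Matrix.diagonal_apply]
  by_cases hij : i = j
  · subst hij
    by_cases hi : i = 0
    · subst hi; norm_num
    · have : (i : ℕ) ≠ 0 := fun hh => hi (Fin.ext hh)
      simp [hi, this]
  · by_cases hi : i = 0
    · have : j ≠ 0 := fun hh => hij (hi.trans hh.symm)
      simp [hij, this]
    · simp [hij, hi]

lemma dot_etaM (m : ℕ) (l : Fin (m + 2) → ℝ) :
    dotProduct l ((etaM m).mulVec l) = ∑ i, l i * l i - 2 * (l 0 * l 0) := by
  rw [etaM, dotProduct]
  simp only [Matrix.mulVec_diagonal]
  rw [Fin.sum_univ_succ, Fin.sum_univ_succ (fun i => l i * l i)]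
  simp
  ring

lemma aux_succ_succ {m : ℕ} (i : Fin m) : i.succ.succ ≠ (1 : Fin (m + 2)) := by
  intro h
  have := congrArg Fin.val h
  simp at this

lemma exists_frame {m : ℕ} (G P : Matrix (Fin (m + 2)) (Fin (m + 2)) ℝ) (hP : IsUnit P.det)
    (hPG : P.transpose * G * P = etaM m) (l : Fin (m + 2) → ℝ) (hl : l ≠ 0)
    (hnull : dotProduct l (G.mulVec l) = 0) :
    ∃ Q R : Matrix (Fin (m + 2)) (Fin (m + 2)) ℝ, Q * R = 1 ∧
      Q.transpose * G * Q = etaN m ∧ ∀ a, Q a 0 = l a := by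
  set k := P⁻¹.mulVec l with hk
  have hlk : P.mulVec k = l := by
    rw [hk, Matrix.mulVec_mulVec, Matrix.mul_nonsing_inv _ hP, Matrix.one_mulVec]
  have hk0 : k ≠ 0 := by
    intro h
    rw [h, Matrix.mulVec_zero] at hlk
    exact hl hlk.symm
  have hkn : ∑ i, k i * k i = 2 * (k 0 * k 0) := by
    have h1 : dotProduct k ((etaM m).mulVec k) = 0 := by
      rw [← hPG, ← Matrix.mulVec_mulVec, hlk, ← Matrix.mulVec_mulVec, Matrix.dotProduct_mulVec,
        Matrix.vecMul_transpose, hlk, hnull]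
    rw [dot_etaM] at h1
    linarith
  have ht : k 0 ≠ 0 := by
    intro h
    rw [h, mul_zero, mul_zero] at hkn
    apply hk0
    funext i
    have := (Finset.sum_eq_zero_iff_of_nonneg (fun i _ => mul_self_nonneg (k i))).1 hkn i
      (Finset.mem_univ _)
    exact mul_self_eq_zero.1 this
  obtain ⟨O, hO, hO0, hO1⟩ := exists_rot m (fun i => if i = 0 then 0 else k i / k 0) (by simp) (by
    rw [Fin.sum_univ_succ] at hkn ⊢
    simp only [Fin.succ_ne_zero, if_false, if_true, mul_zero, zero_add]
    have h2 : ∑ i : Fin (m + 1), k i.succ * k i.succ = k 0 * k 0 := by linarith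
    have h3 : ∀ i : Fin (m + 1), k i.succ / k 0 * (k i.succ / k 0)
        = k i.succ * k i.succ / (k 0 * k 0) := by
      intro i; field_simp
    simp only [h3]
    rw [← Finset.sum_div, h2, div_self (mul_ne_zero ht ht)])
  have hgram : (P * O * boostM m (k 0)).transpose * G * (P * O * boostM m (k 0)) = etaN m := by
    rw [← boostM_gram m (k 0) ht, ← hO, ← hPG]
    simp only [Matrix.transpose_mul, Matrix.mul_assoc]
  refine ⟨P * O * boostM m (k 0), etaN m * ((P * O * boostM m (k 0)).transpose * G), ?_, hgram, ?_⟩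
  · rw [mul_eq_one_comm, Matrix.mul_assoc, hgram, etaN_sq]
  · intro a
    rw [← hlk, Matrix.mul_assoc, Matrix.mul_apply, Matrix.mulVec, dotProduct]
    refine Finset.sum_congr rfl fun b _ => ?_
    congr 1
    rw [Matrix.mul_apply, Fin.sum_univ_succ, Fin.sum_univ_succ]
    have h1 : Fin.succ (0 : Fin (m + 1)) = 1 := rfl
    rw [h1, hO0, hO1]
    have h2 : ∀ i : Fin m, boostM m (k 0) i.succ.succ 0 = 0 := by
      intro i
      simp [boostM, aux_succ_succ]
    simp only [h2, mul_zero, Finset.sum_const_zero, add_zero]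
    by_cases hb : b = 0
    · subst hb
      simp [boostM]
    · simp [boostM, hb]
      field_simp

lemma exists_null {m : ℕ} (G P : Matrix (Fin (m + 2)) (Fin (m + 2)) ℝ) (hP : IsUnit P.det)
    (hPG : P.transpose * G * P = etaM m) :
    ∃ l : Fin (m + 2) → ℝ, l ≠ 0 ∧ dotProduct l (G.mulVec l) = 0 := by
  set k : Fin (m + 2) → ℝ := fun i => if i = 0 then 1 else if i = 1 then 1 else 0 with hk
  refine ⟨P.mulVec k, ?_, ?_⟩
  · intro h
    have h1 : P⁻¹.mulVec (P.mulVec k) = k := by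
      rw [Matrix.mulVec_mulVec, Matrix.nonsing_inv_mul _ hP, Matrix.one_mulVec]
    rw [h, Matrix.mulVec_zero] at h1
    have := congrFun h1 0
    simp [hk] at this
  · have h1 : dotProduct k ((etaM m).mulVec k) = 0 := by
      rw [dot_etaM, Fin.sum_univ_succ, Fin.sum_univ_succ]
      simp [hk, aux_succ_succ]
      norm_num
    rw [← hPG, ← Matrix.mulVec_mulVec, ← Matrix.mulVec_mulVec, Matrix.dotProduct_mulVec,
      Matrix.vecMul_transpose] at h1
    exact h1

lemma frame_inv {m : ℕ} (G Q R : Matrix (Fin (m + 2)) (Fin (m + 2)) ℝ) (hQ : Q * R = 1)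
    (h : Q.transpose * G * Q = etaN m) (c d : Fin (m + 2)) :
    G⁻¹ c d = ∑ a, Q c a * Q d (Equiv.swap 0 1 a) := by
  have h1 : G⁻¹ = Q * etaN m * Q.transpose := by
    apply Matrix.inv_eq_left_inv
    have h2 : (Q.transpose * G) = etaN m * R := by
      rw [← h, Matrix.mul_assoc, hQ, Matrix.mul_one]
    rw [Matrix.mul_assoc, h2, ← Matrix.mul_assoc, Matrix.mul_assoc Q, etaN_sq, Matrix.mul_one, hQ]
  rw [h1, Matrix.mul_assoc, Matrix.mul_apply]
  refine Finset.sum_congr rfl fun a _ => ?_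
  simp [Matrix.mul_apply, etaN]

lemma frame_lower {m : ℕ} (G Q : Matrix (Fin (m + 2)) (Fin (m + 2)) ℝ)
    (h : Q.transpose * G * Q = etaN m) (l : Fin (m + 2) → ℝ) (hl : ∀ a, Q a 0 = l a)
    (b : Fin (m + 2)) :
    ∑ c, (∑ a, G c a * l a) * Q c b = if b = 1 then 1 else 0 := by
  have h1 := congrFun (congrFun h b) 0
  rw [Matrix.mul_assoc, Matrix.mul_apply] at h1
  simp only [Matrix.mul_apply, hl, Matrix.transpose_apply] at h1
  rw [Finset.sum_congr rfl fun c _ => mul_comm _ (Q c b), h1, etaN]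
  by_cases hb : b = 1
  · subst hb; simp
  · by_cases hb0 : b = 0
    · subst hb0; simp
    · rw [Equiv.swap_apply_of_ne_of_ne hb0 hb]
      simp [hb, Ne.symm hb0]

/-! ### Part F: evaluating contraction schemes -/

lemma vsi_general {n p : ℕ} {g : MetricField n} {F : TensorField n p} {x : Pt n}
    (h : IsVSI0At g F x) {J L : Type} [Fintype J] [Fintype L] [DecidableEq J] [Nonempty J]
    (e : L × Bool ≃ J × Fin p) :
    ∑ φ : J × Fin p → Fin n, (∏ i : L, (g x)⁻¹ (φ (e (i, false))) (φ (e (i, true)))) *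
      ∏ j : J, F x (fun s => φ (j, s)) = 0 := by
  classical
  let eJ := Fintype.equivFin J
  let eL := Fintype.equivFin L
  let ε : Fin (Fintype.card L) × Bool ≃ J × Fin p :=
    (Equiv.prodCongr eL.symm (Equiv.refl Bool)).trans e
  let τ : J × Fin p ≃ (Σ _ : Fin (Fintype.card J), Fin p) :=
    (Equiv.prodCongr eJ (Equiv.refl (Fin p))).trans (Equiv.sigmaEquivProd _ _).symm
  let S : ConcomScheme p 0 :=
    { N := Fintype.card J
      hN := Fintype.card_pos
      ord := fun _ => 0
      m := Fintype.card L
      slots := ((Equiv.sumEmpty _ _).trans ε).trans τ }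
  have h1 := h S (fun _ => rfl) (fun i => i.elim0)
  rw [← h1]
  change _ = ∑ φ : Fin (Fintype.card L) × Bool → Fin n, _
  rw [← (Equiv.arrowCongr ε.symm (Equiv.refl (Fin n))).sum_comp]
  refine Finset.sum_congr rfl fun φ _ => ?_
  have hφ : (Equiv.arrowCongr ε.symm (Equiv.refl (Fin n))) φ = φ ∘ ε := by
    funext y; simp [Equiv.arrowCongr]
  rw [hφ]
  congr 1
  · change _ = ∏ i : Fin (Fintype.card L), (g x)⁻¹ (φ (e (eL.symm i, false))) (φ (e (eL.symm i, true)))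
    exact (Equiv.prod_comp eL.symm fun i => (g x)⁻¹ (φ (e (i, false))) (φ (e (i, true)))).symm
  · change _ = ∏ j : Fin (Fintype.card J), F x
      (fun s => φ (ε (ε.symm (eJ.symm j, s))))
    simp only [Equiv.apply_symm_apply]
    exact (Equiv.prod_comp eJ.symm fun j => F x (fun s => φ (j, s))).symm

/-- the cyclic contraction pattern -/
def cycEquiv (k q : ℕ) :
    (Fin (k + 1) × Fin (q + 1)) × Bool ≃ (Fin (k + 1) × Bool) × Fin (q + 1) where
  toFun y := (if y.1.2 = 0 then (if y.2 = true then (y.1.1 + 1, false) else (y.1.1, true))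
    else (y.1.1, y.2), y.1.2)
  invFun y := if y.2 = 0 then (if y.1.2 = true then ((y.1.1, y.2), false)
    else ((y.1.1 - 1, y.2), true)) else ((y.1.1, y.2), y.1.2)
  left_inv := by
    rintro ⟨⟨i, s⟩, b⟩
    by_cases hs : s = 0 <;> cases b <;> simp [hs]
  right_inv := by
    rintro ⟨⟨i, b⟩, s⟩
    by_cases hs : s = 0 <;> cases b <;> simp [hs]

/-- rearranging the summation indices -/
def dataEquiv (k q : ℕ) (κ : Type) :
    ((Fin (k + 1) → κ) × (Fin (k + 1) → κ × (Fin q → κ) × (Fin q → κ))) ≃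
      ((Fin (k + 1) × Bool) × Fin (q + 1) → κ) where
  toFun d := fun y => if y.1.2 = true
    then (Fin.cons (d.2 y.1.1).1 (d.2 y.1.1).2.2 : Fin (q + 1) → κ) y.2
    else (Fin.cons (d.1 y.1.1) (d.2 y.1.1).2.1 : Fin (q + 1) → κ) y.2
  invFun φ := (fun i => φ ((i, false), 0), fun i => (φ ((i, true), 0),
    fun s => φ ((i, false), s.succ), fun s => φ ((i, true), s.succ)))
  left_inv := by
    rintro ⟨α, χ⟩
    simp
  right_inv := by
    intro φ
    funext y
    obtain ⟨⟨i, b⟩, s⟩ := y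
    refine Fin.cases ?_ (fun s => ?_) s <;> cases b <;> simp

/-- the quadratic concomitant `F_{a c…} F_b{}^{c…}` -/
def wMat {q n : ℕ} (Gi : Matrix (Fin n) (Fin n) ℝ) (f : (Fin (q + 1) → Fin n) → ℝ) :
    Matrix (Fin n) (Fin n) ℝ := Matrix.of fun a b =>
  ∑ c : Fin q → Fin n, ∑ d : Fin q → Fin n,
    f (Fin.cons a c) * f (Fin.cons b d) * ∏ i, Gi (c i) (d i)

lemma trace_pow_zero {n q : ℕ} {g : MetricField n} {F : TensorField n (q + 1)} {x : Pt n}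
    (h : IsVSI0At g F x) (k : ℕ) : ((wMat (g x)⁻¹ (F x) * (g x)⁻¹) ^ (k + 1)).trace = 0 := by
  rw [← aux_cyc_trace, ← vsi_general h (cycEquiv k q), ← (dataEquiv k q (Fin n)).sum_comp,
    Fintype.sum_prod_type]
  refine Finset.sum_congr rfl fun α _ => ?_
  have h1 : ∀ a a' : Fin n, (wMat (g x)⁻¹ (F x) * (g x)⁻¹) a a' =
      ∑ y : Fin n × (Fin q → Fin n) × (Fin q → Fin n),
        F x (Fin.cons a y.2.1) * F x (Fin.cons y.1 y.2.2) * (∏ i, (g x)⁻¹ (y.2.1 i) (y.2.2 i)) *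
          (g x)⁻¹ y.1 a' := by
    intro a a'
    rw [Matrix.mul_apply, Fintype.sum_prod_type]
    refine Finset.sum_congr rfl fun b _ => ?_
    rw [Fintype.sum_prod_type, wMat, Matrix.of_apply, Finset.sum_mul]
    refine Finset.sum_congr rfl fun c _ => ?_
    rw [Finset.sum_mul]
  simp only [h1]
  rw [Fintype.prod_sum]
  refine Finset.sum_congr rfl fun χ _ => ?_
  rw [Fintype.prod_prod_type, Fintype.prod_prod_type, ← Finset.prod_mul_distrib]
  refine Finset.prod_congr rfl fun i _ => ?_
  rw [Fin.prod_univ_succ, Fintype.prod_bool]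
  simp only [cycEquiv, dataEquiv, Equiv.coe_fn_mk, Fin.cons_zero, Fin.cons_succ, if_true,
    Fin.succ_ne_zero, if_false, Bool.false_eq_true]
  ring

/-! ### Part G: contraction schemes in a null frame -/

lemma value_frame {n p : ℕ} (S : ConcomScheme p 0) (g : MetricField n) (F : TensorField n p)
    (x : Pt n) (v : Fin 0 → Fin n) (Q : Matrix (Fin n) (Fin n) ℝ) (bar : Fin n → Fin n)
    (hG : ∀ c d, (g x)⁻¹ c d = ∑ a, Q c a * Q d (bar a)) :
    S.value g F x v = ∑ α : Fin S.m → Fin n, ∏ j : Fin S.N,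
      pull Q (covDIter g F (S.ord j) x) (fun s =>
        Sum.elim (fun y : Fin S.m × Bool => if y.2 = true then bar (α y.1) else α y.1) v
          (S.slots.symm ⟨j, s⟩)) := by
  classical
  let ε : Fin S.m × Bool ≃ (Σ j : Fin S.N, Fin (p + S.ord j)) :=
    (Equiv.sumEmpty _ _).symm.trans S.slots
  have helim : ∀ (φ : Fin S.m × Bool → Fin n) y, Sum.elim φ v (S.slots.symm y) = φ (ε.symm y) := by
    intro φ y
    change _ = φ (Equiv.sumEmpty _ _ (S.slots.symm y))
    rcases S.slots.symm y with z | z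
    · simp
    · exact z.elim0
  simp only [ConcomScheme.value, helim]
  have h1 : ∀ φ : Fin S.m × Bool → Fin n,
      (∏ i : Fin S.m, (g x)⁻¹ (φ (i, false)) (φ (i, true))) = ∑ α : Fin S.m → Fin n,
        ∏ y : Fin S.m × Bool, Q (φ y) (if y.2 = true then bar (α y.1) else α y.1) := by
    intro φ
    simp only [hG]
    rw [Fintype.prod_sum]
    refine Finset.sum_congr rfl fun α _ => ?_
    rw [Fintype.prod_prod_type]
    refine Finset.prod_congr rfl fun i _ => ?_
    rw [Fintype.prod_bool]
    simp [mul_comm]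
  simp only [h1, Finset.sum_mul]
  rw [Finset.sum_comm]
  refine Finset.sum_congr rfl fun α _ => ?_
  simp only [pull]
  rw [Fintype.prod_sum]
  rw [← ((Equiv.arrowCongr ε (Equiv.refl (Fin n))).trans
    (Equiv.piCurry fun (j : Fin S.N) (_ : Fin (p + S.ord j)) => Fin n)).sum_comp]
  refine Finset.sum_congr rfl fun φ _ => ?_
  have h2 : ∀ j s, ((Equiv.arrowCongr ε (Equiv.refl (Fin n))).trans
    (Equiv.piCurry fun (j : Fin S.N) (_ : Fin (p + S.ord j)) => Fin n)) φ j s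
      = φ (ε.symm ⟨j, s⟩) := fun j s => rfl
  rw [Finset.prod_mul_distrib, mul_comm]
  congr 1
  simp only [h2]
  rw [← Equiv.prod_comp ε.symm, Fintype.prod_sigma]

lemma value_zero {m p : ℕ} (S : ConcomScheme p 0) (hS : ∀ j, S.ord j = 0)
    (g : MetricField (m + 2)) (F : TensorField (m + 2) p)
    (x : Pt (m + 2)) (v : Fin 0 → Fin (m + 2)) (Q : Matrix (Fin (m + 2)) (Fin (m + 2)) ℝ)
    (hG : ∀ c d, (g x)⁻¹ c d = ∑ a, Q c a * Q d (Equiv.swap 0 1 a))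
    (h0 : ∀ (c : Fin p → Fin (m + 2)) i, c i = 0 → pull Q (F x) c = 0)
    (h1 : ∀ c : Fin p → Fin (m + 2), (∀ i, c i ≠ 1) → pull Q (F x) c = 0) :
    S.value g F x v = 0 := by
  have h0' : ∀ o, o = 0 → ∀ (c : Fin (p + o) → Fin (m + 2)) i, c i = 0 →
      pull Q (covDIter g F o x) c = 0 := by
    rintro o rfl; exact h0
  have h1' : ∀ o, o = 0 → ∀ (c : Fin (p + o) → Fin (m + 2)), (∀ i, c i ≠ 1) →
      pull Q (covDIter g F o x) c = 0 := by
    rintro o rfl; exact h1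
  rw [value_frame S g F x v Q _ hG]
  refine Finset.sum_eq_zero fun α _ => ?_
  set ψ : (Fin S.m × Bool) ⊕ Fin 0 → Fin (m + 2) :=
    Sum.elim (fun y : Fin S.m × Bool => if y.2 = true then Equiv.swap 0 1 (α y.1) else α y.1) v
    with hψ
  by_contra hne
  have hj : ∀ j, pull Q (covDIter g F (S.ord j) x) (fun s => ψ (S.slots.symm ⟨j, s⟩)) ≠ 0 :=
    fun j => Finset.prod_ne_zero_iff.1 hne j (Finset.mem_univ _)
  have hno0 : ∀ y, ψ y ≠ 0 := by
    intro y hy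
    refine hj (S.slots y).1 (h0' _ (hS _) _ (S.slots y).2 ?_)
    simpa using hy
  have hex : ∃ y, ψ y = 1 := by
    by_contra hcon
    push Not at hcon
    exact hj ⟨0, S.hN⟩ (h1' _ (hS _) _ fun i => hcon _)
  obtain ⟨y, hy⟩ := hex
  rcases y with ⟨i, b⟩ | y
  · cases b
    · apply hno0 (Sum.inl (i, true))
      simp [hψ] at hy
      simp [hψ, hy]
    · apply hno0 (Sum.inl (i, false))
      simp only [hψ, Sum.elim_inl, if_true] at hy
      simp only [hψ, Sum.elim_inl]
      have := congrArg (Equiv.swap (0 : Fin (m + 2)) 1) hy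
      simpa using this
  · exact y.elim0

/-! ### Part H: the null vector -/

lemma wMat_symm {q n : ℕ} (Gi : Matrix (Fin n) (Fin n) ℝ) (hGi : Gi.IsSymm)
    (f : (Fin (q + 1) → Fin n) → ℝ) : (wMat Gi f).IsSymm := by
  ext a b
  rw [Matrix.transpose_apply]
  simp only [wMat, Matrix.of_apply]
  rw [Finset.sum_comm]
  refine Finset.sum_congr rfl fun c _ => Finset.sum_congr rfl fun d _ => ?_
  have : ∀ i, Gi (d i) (c i) = Gi (c i) (d i) := fun i => hGi.apply _ _
  simp only [this]
  ring

lemma exists_kernel {m : ℕ} (G P W : Matrix (Fin (m + 2)) (Fin (m + 2)) ℝ) (hP : IsUnit P.det)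
    (hPG : P.transpose * G * P = etaM m) (hG : G.IsSymm) (hdet : IsUnit G.det) (hW : W.IsSymm)
    (hnil : IsNilpotent (W * G⁻¹)) :
    ∃ l : Fin (m + 2) → ℝ, l ≠ 0 ∧ dotProduct l (G.mulVec l) = 0 ∧ W.mulVec l = 0 := by
  set M := G⁻¹ * W with hM
  have hGi : G⁻¹.IsSymm := by
    rw [Matrix.IsSymm, Matrix.transpose_nonsing_inv, hG.eq]
  have hMt : M.transpose = W * G⁻¹ := by
    rw [hM, Matrix.transpose_mul, hW.eq, hGi.eq]
  have hGM : G * M = W := by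
    rw [hM, ← Matrix.mul_assoc, Matrix.mul_nonsing_inv _ hdet, Matrix.one_mul]
  have hex : ∃ k, M ^ k = 0 := by
    obtain ⟨k, hk⟩ := hnil
    refine ⟨k, ?_⟩
    rw [← hMt, ← Matrix.transpose_pow] at hk
    have h8 := congrArg Matrix.transpose hk
    rwa [Matrix.transpose_transpose, Matrix.transpose_zero] at h8
  classical
  have hk0 : Nat.find hex ≠ 0 := by
    intro h0
    have := Nat.find_spec hex
    rw [h0, pow_zero] at this
    exact one_ne_zero this
  obtain ⟨k, hk⟩ := Nat.exists_eq_succ_of_ne_zero hk0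
  have hkz : M ^ (k + 1) = 0 := by
    have := Nat.find_spec hex
    rwa [hk] at this
  have hkn : M ^ k ≠ 0 := Nat.find_min hex (by omega)
  have hker : ∀ l, M.mulVec l = 0 → W.mulVec l = 0 := by
    intro l hl
    rw [← hGM, ← Matrix.mulVec_mulVec, hl, Matrix.mulVec_zero]
  rcases Nat.eq_zero_or_pos k with h0 | hpos
  · subst h0
    obtain ⟨l, hl, hn⟩ := exists_null G P hP hPG
    refine ⟨l, hl, hn, hker l ?_⟩
    rw [zero_add, pow_one] at hkz
    rw [hkz, Matrix.zero_mulVec]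
  · have hv : ∃ v, (M ^ k).mulVec v ≠ 0 := by
      by_contra hcon
      push Not at hcon
      apply hkn
      ext a b
      have := congrFun (hcon (Pi.single b 1)) a
      simpa using this
    obtain ⟨v, hv⟩ := hv
    refine ⟨(M ^ k).mulVec v, hv, ?_, hker _ ?_⟩
    · have hc : ∀ j, (M ^ j).transpose * G = G * M ^ j := by
        intro j
        induction j with
        | zero => simp
        | succ j ih =>
          have h1 : M.transpose * G = G * M := by
            rw [hMt, hGM, Matrix.mul_assoc, Matrix.nonsing_inv_mul _ hdet, Matrix.mul_one]
          rw [pow_succ, Matrix.transpose_mul, Matrix.mul_assoc, ih, ← Matrix.mul_assoc, h1,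
            Matrix.mul_assoc, ← pow_succ', ← pow_succ]
      have hz : (M ^ k).transpose * G * M ^ k = 0 := by
        rw [hc, Matrix.mul_assoc, ← pow_add, show k + k = (k + 1) + (k - 1) by omega, pow_add, hkz,
          Matrix.zero_mul, Matrix.mul_zero]
      have h9 : dotProduct v (((M ^ k).transpose * G * M ^ k).mulVec v) = 0 := by
        rw [hz, Matrix.zero_mulVec, dotProduct_zero]
      rw [← Matrix.mulVec_mulVec, ← Matrix.mulVec_mulVec, Matrix.dotProduct_mulVec,
        Matrix.vecMul_transpose] at h9
      exact h9
    · rw [Matrix.mulVec_mulVec, ← pow_succ', hkz, Matrix.zero_mulVec]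

/-! ### Part I: assembling -/

lemma sum_rot {α β : Type*} [Fintype α] [Fintype β] (h : α → α → β → ℝ) :
    ∑ c, ∑ d, ∑ a, h c d a = ∑ a, ∑ c, ∑ d, h c d a := by
  have h1 : ∀ c, ∑ d, ∑ a, h c d a = ∑ a, ∑ d, h c d a := fun c => Finset.sum_comm
  simp only [h1]
  exact Finset.sum_comm

lemma forward_pt {m q : ℕ} (G : Matrix (Fin (m + 2)) (Fin (m + 2)) ℝ)
    {f : (Fin (q + 1) → Fin (m + 2)) → ℝ} (hf : Alt f)
    (Q R : Matrix (Fin (m + 2)) (Fin (m + 2)) ℝ) (hQ : Q * R = 1)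
    (hQG : Q.transpose * G * Q = etaN m) (l : Fin (m + 2) → ℝ) (hl : ∀ a, Q a 0 = l a)
    (hW : (wMat G⁻¹ f).mulVec l = 0) (hWs : (wMat G⁻¹ f).IsSymm)
    (htr : (wMat G⁻¹ f * G⁻¹).trace = 0) (hGi : G⁻¹.IsSymm) :
    (∀ c : Fin q → Fin (m + 2), ∑ a, l a * f (Fin.cons a c) = 0) ∧
      ∀ idx, wedge1 (fun c => ∑ b, G c b * l b) f idx = 0 := by
  have hinv := frame_inv G Q R hQ hQG
  -- contraction of W with two frame vectors
  have hcon : ∀ b, ∑ c : Fin q → Fin (m + 2),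
      pull Q f (Fin.cons 0 c) * pull Q f (Fin.cons b (Equiv.swap 0 1 ∘ c)) = 0 := by
    intro b
    have h1 := inner_pull (ι := Fin q) G⁻¹ Q (Equiv.swap 0 1) hinv
      (fun c' => ∑ a, Q a 0 * f (Fin.cons a c')) (fun c' => ∑ a, Q a b * f (Fin.cons a c'))
    simp only [pull_contr] at h1
    rw [← h1]
    have h2 : ∀ c d : Fin q → Fin (m + 2), (∑ a, Q a 0 * f (Fin.cons a c)) *
        (∑ a, Q a b * f (Fin.cons a d)) * ∏ i, G⁻¹ (c i) (d i) =
        ∑ a', ∑ a, Q a' b * (l a * (f (Fin.cons a c) * f (Fin.cons a' d) *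
          ∏ i, G⁻¹ (c i) (d i))) := by
      intro c d
      rw [Finset.sum_mul_sum, Finset.sum_comm, Finset.sum_mul]
      refine Finset.sum_congr rfl fun a' _ => ?_
      rw [Finset.sum_mul]
      refine Finset.sum_congr rfl fun a _ => ?_
      rw [hl]
      ring
    simp only [h2]
    have h3 : ∑ a', Q a' b * (∑ a, wMat G⁻¹ f a' a * l a) = 0 := by
      refine Finset.sum_eq_zero fun a' _ => ?_
      have := congrFun hW a'
      simp only [Matrix.mulVec, dotProduct, Pi.zero_apply] at this
      rw [this, mul_zero]
    have h4 : ∀ a' a, wMat G⁻¹ f a' a = wMat G⁻¹ f a a' := fun a' a => hWs.apply _ _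
    rw [← h3]
    rw [sum_rot]
    refine Finset.sum_congr rfl fun a' _ => ?_
    rw [sum_rot, Finset.mul_sum]
    refine Finset.sum_congr rfl fun a _ => ?_
    rw [h4, wMat, Matrix.of_apply, mul_comm _ (l a)]
    simp only [Finset.mul_sum]
  have hff : ∑ c : Fin (q + 1) → Fin (m + 2), pull Q f c * pull Q f (Equiv.swap 0 1 ∘ c) = 0 := by
    rw [← inner_pull G⁻¹ Q (Equiv.swap 0 1) hinv f f, ← htr, Matrix.trace,
      ← (Fin.consEquiv fun _ => Fin (m + 2)).sum_comp, Fintype.sum_prod_type]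
    refine Finset.sum_congr rfl fun a _ => ?_
    rw [Matrix.diag_apply, Matrix.mul_apply]
    have h5 : ∀ c : Fin q → Fin (m + 2), (Fin.consEquiv fun _ => Fin (m + 2)) (a, c)
      = Fin.cons a c := fun _ => rfl
    have h6 : ∀ b, wMat G⁻¹ f a b * G⁻¹ b a = ∑ c : Fin q → Fin (m + 2), ∑ d : Fin q → Fin (m + 2),
        f (Fin.cons a c) * f (Fin.cons b d) * (G⁻¹ a b * ∏ i, G⁻¹ (c i) (d i)) := by
      intro b
      rw [wMat, Matrix.of_apply, Finset.sum_mul, hGi.apply]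
      refine Finset.sum_congr rfl fun c _ => ?_
      rw [Finset.sum_mul]
      refine Finset.sum_congr rfl fun d _ => ?_
      ring
    simp only [h6]
    refine Eq.trans ?_ Finset.sum_comm
    refine Finset.sum_congr rfl fun c _ => ?_
    rw [← (Fin.consEquiv fun _ => Fin (m + 2)).sum_comp, Fintype.sum_prod_type]
    refine Finset.sum_congr rfl fun b _ => Finset.sum_congr rfl fun d _ => ?_
    have h7 : (Fin.consEquiv fun _ => Fin (m + 2)) (b, d) = Fin.cons b d := rfl
    rw [h5, h7, Fin.prod_univ_succ]
    simp only [Fin.cons_zero, Fin.cons_succ]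
  obtain ⟨r1, r2⟩ := frame_forward (hf.pull Q) (hcon 0) (hcon 1) hff
  constructor
  · refine pull_eq_zero Q R hQ (fun c : Fin q → Fin (m + 2) => ∑ a, l a * f (Fin.cons a c)) ?_
    intro c
    have := pull_contr Q f 0 c
    simp only [hl] at this
    rw [this, r1]
  · refine pull_eq_zero Q R hQ _ ?_
    intro a
    rw [pull_wedge1]
    simp only [frame_lower G Q hQG l hl]
    exact frame_wedge r2 a

lemma backward_pt {m q : ℕ} (G : Matrix (Fin (m + 2)) (Fin (m + 2)) ℝ)
    {f : (Fin (q + 1) → Fin (m + 2)) → ℝ} (hf : Alt f)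
    (Q : Matrix (Fin (m + 2)) (Fin (m + 2)) ℝ)
    (hQG : Q.transpose * G * Q = etaN m) (l : Fin (m + 2) → ℝ) (hl : ∀ a, Q a 0 = l a)
    (h1 : ∀ c : Fin q → Fin (m + 2), ∑ a, l a * f (Fin.cons a c) = 0)
    (h2 : ∀ idx, wedge1 (fun c => ∑ b, G c b * l b) f idx = 0) :
    (∀ (c : Fin (q + 1) → Fin (m + 2)) i, c i = 0 → pull Q f c = 0) ∧
      ∀ c : Fin (q + 1) → Fin (m + 2), (∀ i, c i ≠ 1) → pull Q f c = 0 := by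
  constructor
  · refine fun c i hi => (hf.pull Q).zero_of_mem (fun c => ?_) c i hi
    rw [← pull_contr]
    simp only [hl, h1]
    simp [pull]
  · intro c hc
    refine wedge1_cons (hf.pull Q) 1 c hc ?_
    have := pull_wedge1 Q (fun c => ∑ b, G c b * l b) f (Fin.cons 1 c)
    simp only [frame_lower G Q hQG l hl] at this
    rw [← this]
    simp [pull, h2]

lemma main_pt {m q : ℕ} (g : MetricField (m + 2)) (hg : IsLorentzMetric g)
    (F : TensorField (m + 2) (q + 1)) (x : Pt (m + 2)) (hF : Alt (F x)) :
    IsVSI0At g F x ↔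
      ∃ l : Fin (m + 2) → ℝ, l ≠ 0 ∧ dotProduct l ((g x).mulVec l) = 0 ∧
        (∀ c : Fin q → Fin (m + 2), ∑ a, l a * F x (Fin.cons a c) = 0) ∧
        ∀ idx, wedge1 (fun c => ∑ b, g x c b * l b) (F x) idx = 0 := by
  obtain ⟨-, hsymm, hdiag⟩ := hg
  obtain ⟨P, hP, hPG⟩ := hdiag x
  replace hPG : P.transpose * g x * P = etaM m := hPG
  have hG := hsymm x
  have hdet : IsUnit (g x).det := by
    have h1 := congrArg Matrix.det (etaM_sq m)
    rw [← hPG, Matrix.det_one] at h1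
    simp only [Matrix.det_mul] at h1
    refine isUnit_iff_ne_zero.2 fun h0 => ?_
    rw [h0] at h1
    simp at h1
  have hGi : (g x)⁻¹.IsSymm := by
    rw [Matrix.IsSymm, Matrix.transpose_nonsing_inv, hG.eq]
  have hWs := wMat_symm (g x)⁻¹ hGi (F x)
  constructor
  · intro h
    obtain ⟨l, hl, hn, hW⟩ := exists_kernel (g x) P (wMat (g x)⁻¹ (F x)) hP hPG hG hdet hWs
      (aux_nilp _ (trace_pow_zero h))
    obtain ⟨Q, R, hQ, hQG, hQl⟩ := exists_frame (g x) P hP hPG l hl hn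
    have htr := trace_pow_zero h 0
    rw [zero_add, pow_one] at htr
    exact ⟨l, hl, hn, forward_pt (g x) hF Q R hQ hQG l hQl hW hWs htr hGi⟩
  · rintro ⟨l, hl, hn, h1, h2⟩ S hS v
    obtain ⟨Q, R, hQ, hQG, hQl⟩ := exists_frame (g x) P hP hPG l hl hn
    obtain ⟨r1, r2⟩ := backward_pt (g x) hF Q hQG l hQl h1 h2
    exact value_zero S hS g F x v Q (frame_inv (g x) Q R hQ hQG) r1 r2


/-- a `p`-form at a point of a Lorentzian spacetime is VSI₀ (all
zeroth-order scalar polynomial invariants vanish) iff it is of type N there. -/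
theorem vsi0_iff_typeN {n p : ℕ} [NeZero n] [NeZero p] (hn : 2 ≤ n)
    (g : MetricField n) (hg : IsLorentzMetric g) (F : TensorField n p)
    (hF : ∀ (x : Pt n) (idx : Fin p → Fin n) (σ : Equiv.Perm (Fin p)),
      F x (idx ∘ σ) = ((Equiv.Perm.sign σ : ℤ) : ℝ) * F x idx)
    (x : Pt n) :
    IsVSI0At g F x ↔
      ∃ ℓ : Fin n → ℝ, ℓ ≠ 0 ∧ gdot g x ℓ ℓ = 0 ∧
        (∀ v : Fin p → Fin n, (∑ a, ℓ a * F x (Function.update v 0 a)) = 0) ∧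
        (∀ idx : Fin (p+1) → Fin n,
          (∑ σ : Equiv.Perm (Fin (p+1)), ((Equiv.Perm.sign σ : ℤ) : ℝ) *
            ((∑ b, g x (idx (σ 0)) b * ℓ b) * F x fun m => idx (σ m.succ))) = 0) := by
  obtain ⟨m, rfl⟩ : ∃ m, n = m + 2 := ⟨n - 2, by omega⟩
  obtain ⟨q, rfl⟩ : ∃ q, p = q + 1 := ⟨p - 1, by have := NeZero.pos p; omega⟩
  rw [main_pt g hg F x (hF x)]
  refine exists_congr fun l => and_congr Iff.rfl (and_congr ?_ (and_congr ?_ Iff.rfl))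
  · have : gdot g x l l = dotProduct l ((g x).mulVec l) := by
      simp only [gdot, dotProduct, Matrix.mulVec, Finset.mul_sum]
      refine Finset.sum_congr rfl fun a _ => Finset.sum_congr rfl fun b _ => ?_
      ring
    rw [this]
  · have hu : ∀ (v : Fin (q + 1) → Fin (m + 2)) a,
        Function.update v 0 a = Fin.cons a (Fin.tail v) := by
      intro v a
      conv_lhs => rw [← Fin.cons_self_tail v]
      exact Fin.update_cons_zero _ _ _
    constructor
    · intro h v
      have := h (Fin.tail v)
      simp only [← hu] at this
      exact this
    · intro h c
      have := h (Fin.cons 0 c)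
      simp only [hu, Fin.tail_cons] at this
      exact this

end VSI
end
end

section
/- For a VSI p-form F = (1/(p−1)!) f_{α₁…α_{p−1}}(u,x) du ∧ dx^{α₁} ∧ … ∧ dx^{α_{p−1}} on a degenerate Kundt background ds² = 2 du [dr + H du + W_α dx^α] + g_{αβ}(u,x) dx^α dx^β, the source-free Maxwell equations dF = 0 and d*F = 0 are equivalent to f_{[α₂…α_{p−1},α₁]} = 0 and (√(g̃) f^{β α₁…α_{p−2}})_{,β} = 0, where g̃ = det g_{αβ}; i.e., the (p−1)-form f must be harmonic (closed and co-closed, possibly depending on u as a parameter) in the (n−2)-dimensional Riemannian transverse geometry g_{αβ}(u,x). -/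
open scoped BigOperators

noncomputable section

namespace VSI

/-! ### Helper lemmas: alternating index functions -/

/-- A function of a multi-index is alternating. -/
def AltP {n k : ℕ} (t : (Fin k → Fin n) → ℝ) : Prop :=
  ∀ (idx : Fin k → Fin n) (σ : Equiv.Perm (Fin k)),
    t (idx ∘ σ) = ((Equiv.Perm.sign σ : ℤ) : ℝ) * t idx

/-- Alternating sum over the choice of a distinguished index. -/
def wed {n k : ℕ} (φ : Fin n → (Fin k → Fin n) → ℝ) (idx : Fin (k+1) → Fin n) : ℝ :=
  ∑ m : Fin (k+1), (-1 : ℝ) ^ (m : ℕ) * φ (idx m) (fun i => idx (m.succAbove i))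

lemma altP_of_adj {n k : ℕ} (t : (Fin (k+1) → Fin n) → ℝ)
    (h : ∀ (i : Fin k) (idx : Fin (k+1) → Fin n),
      t (idx ∘ Equiv.swap i.castSucc i.succ) = - t idx) : AltP t := by
  intro idx σ
  have hσ : σ ∈ Submonoid.closure
      (Set.range fun i : Fin k ↦ Equiv.swap i.castSucc i.succ) := by
    rw [Equiv.Perm.mclosure_swap_castSucc_succ]; trivial
  induction hσ using Submonoid.closure_induction generalizing idx with
  | mem x hx =>
    obtain ⟨i, rfl⟩ := hx
    simp only [h]
    rw [Equiv.Perm.sign_swap (by simp [Fin.ext_iff])]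
    simp
  | one => simp
  | mul x y _ _ hx hy =>
    rw [Equiv.Perm.coe_mul, ← Function.comp_assoc, hy, hx, Equiv.Perm.sign_mul]
    push_cast
    ring

lemma AltP.swap {n k : ℕ} {t : (Fin k → Fin n) → ℝ} (h : AltP t) (idx : Fin k → Fin n)
    {i j : Fin k} (hij : i ≠ j) : t (idx ∘ Equiv.swap i j) = - t idx := by
  rw [h, Equiv.Perm.sign_swap hij]; simp

lemma AltP.eq_zero {n k : ℕ} {t : (Fin k → Fin n) → ℝ} (h : AltP t) (idx : Fin k → Fin n)
    (hi : ¬ Function.Injective idx) : t idx = 0 := by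
  rw [Function.not_injective_iff] at hi
  obtain ⟨i, j, hij, hne⟩ := hi
  have h1 := h.swap idx hne
  have h2 : idx ∘ Equiv.swap i j = idx := by
    ext l
    simp only [Function.comp, Equiv.swap_apply_def]
    split_ifs with h3 h4
    · rw [h3, hij]
    · rw [h4, hij]
    · rfl
  rw [h2] at h1
  linarith

lemma AltP.insertNth {n k : ℕ} {t : (Fin (k+1) → Fin n) → ℝ} (h : AltP t) (j : Fin (k+1))
    (b : Fin n) (c : Fin k → Fin n) :
    (-1 : ℝ) ^ (j : ℕ) * t (j.insertNth b c : Fin (k+1) → Fin n) = t (Fin.cons b c) := by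
  rw [← Fin.cons_comp_cycleRange, h, Fin.sign_cycleRange]
  push_cast
  rw [← mul_assoc, ← mul_pow]
  simp

lemma wed_alt {n k : ℕ} {φ : Fin n → (Fin k → Fin n) → ℝ} (hφ : ∀ b, AltP (φ b)) :
    AltP (wed φ) := by
  apply altP_of_adj
  intro i idx
  unfold wed
  rw [← Finset.sum_neg_distrib]
  refine Fintype.sum_equiv (Equiv.swap i.castSucc i.succ) _ _ ?_
  intro m
  by_cases h1 : m = i.castSucc
  · subst h1
    have : (fun l => (idx ∘ Equiv.swap i.castSucc i.succ) (i.castSucc.succAbove l))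
        = fun l => idx (i.succ.succAbove l) := by
      ext l
      simp only [Function.comp]
      congr 2
      rcases lt_trichotomy l i with hl | hl | hl
      · rw [Fin.succAbove_of_castSucc_lt _ _ (by simpa using hl),
          Fin.succAbove_of_castSucc_lt _ _ (by simp only [Fin.lt_def, Fin.val_castSucc, Fin.val_succ] at *; omega),
          Equiv.swap_apply_of_ne_of_ne] <;>
          simp only [ne_eq, Fin.ext_iff, Fin.lt_def, Fin.val_castSucc, Fin.val_succ] at * <;> omega
      · subst hl
        simp
      · rw [Fin.succAbove_of_le_castSucc _ _ (by simpa using hl.le),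
          Fin.succAbove_of_le_castSucc _ _ (by simp only [Fin.lt_def, Fin.le_def, Fin.val_castSucc, Fin.val_succ] at *; omega),
          Equiv.swap_apply_of_ne_of_ne] <;>
          simp only [ne_eq, Fin.ext_iff, Fin.lt_def, Fin.val_castSucc, Fin.val_succ] at * <;> omega
    rw [this]
    simp [pow_succ]
  by_cases h2 : m = i.succ
  · subst h2
    have : (fun l => (idx ∘ Equiv.swap i.castSucc i.succ) (i.succ.succAbove l))
        = fun l => idx (i.castSucc.succAbove l) := by
      ext l
      simp only [Function.comp]
      congr 2
      rcases lt_trichotomy l i with hl | hl | hl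
      · rw [Fin.succAbove_of_castSucc_lt i.castSucc _ (by simpa using hl),
          Fin.succAbove_of_castSucc_lt _ _ (by simp only [Fin.lt_def, Fin.val_castSucc, Fin.val_succ] at *; omega),
          Equiv.swap_apply_of_ne_of_ne] <;>
          simp only [ne_eq, Fin.ext_iff, Fin.lt_def, Fin.val_castSucc, Fin.val_succ] at * <;> omega
      · subst hl
        simp
      · rw [Fin.succAbove_of_le_castSucc i.castSucc _ (by simpa using hl.le),
          Fin.succAbove_of_le_castSucc _ _ (by simp only [Fin.lt_def, Fin.le_def, Fin.val_castSucc, Fin.val_succ] at *; omega),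
          Equiv.swap_apply_of_ne_of_ne] <;>
          simp only [ne_eq, Fin.ext_iff, Fin.lt_def, Fin.val_castSucc, Fin.val_succ] at * <;> omega
    rw [this]
    simp [pow_succ]
  · rw [Equiv.swap_apply_of_ne_of_ne h1 h2]
    obtain ⟨a, ha⟩ := Fin.exists_succAbove_eq (Ne.symm h1)
    obtain ⟨b, hb⟩ := Fin.exists_succAbove_eq (Ne.symm h2)
    have hab : a ≠ b := by
      rintro rfl
      rw [ha] at hb
      simp [Fin.ext_iff] at hb
    have : (fun l => (idx ∘ Equiv.swap i.castSucc i.succ) (m.succAbove l))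
        = (fun l => idx (m.succAbove l)) ∘ Equiv.swap a b := by
      ext l
      simp only [Function.comp]
      congr 2
      rw [← ha, ← hb]
      exact congrFun (Function.Injective.swap_comp Fin.succAbove_right_injective a b) l
    rw [this, (hφ _).swap _ hab]
    simp [Equiv.swap_apply_of_ne_of_ne h1 h2]

/-! ### The Levi-Civita symbol as a determinant -/

lemma permSign_eq_det {k : ℕ} (w : Fin k → Fin k) :
    ((permSign w : ℤ) : ℝ) = (Matrix.of fun i l => if w l = i then (1:ℝ) else 0).det := by
  unfold permSign
  split_ifs with h
  · set σ : Equiv.Perm (Fin k) := Equiv.ofBijective w h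
    have : (Matrix.of fun i l => if w l = i then (1:ℝ) else 0) = (σ.permMatrix ℝ).transpose := by
      ext i l
      simp [Equiv.Perm.permMatrix, PEquiv.toMatrix_apply, σ, eq_comm]
    rw [this, Matrix.det_transpose, Matrix.det_permutation]
  · have h' : ¬ Function.Injective w := fun hi => h (Finite.injective_iff_bijective.1 hi)
    rw [Function.not_injective_iff] at h'
    obtain ⟨i, j, hij, hne⟩ := h'
    rw [Matrix.det_zero_of_column_eq hne]
    · simp
    · intro l; simp [hij]

lemma permSign_comp_perm {k : ℕ} (w : Fin k → Fin k) (σ : Equiv.Perm (Fin k)) :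
    ((permSign (w ∘ σ) : ℤ) : ℝ) = ((Equiv.Perm.sign σ : ℤ) : ℝ) * ((permSign w : ℤ) : ℝ) := by
  rw [permSign_eq_det, permSign_eq_det, ← Matrix.det_permute']
  rfl

/-- Antisymmetrization over `k+1` indices in dimension `k` vanishes. -/
lemma over_antisymm {k : ℕ} (w : Fin (k+1) → Fin k) (φ : Fin k → ℝ) :
    ∑ j : Fin (k+1), (-1 : ℝ) ^ (j : ℕ) * φ (w j) *
      ((permSign (fun l => w (j.succAbove l)) : ℤ) : ℝ) = 0 := by
  let M : Matrix (Fin (k+1)) (Fin (k+1)) ℝ := Matrix.of fun i j =>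
    Fin.cases (φ (w j)) (fun i' => if w j = i' then (1:ℝ) else 0) i
  have hM : M.det = 0 := by
    rw [← Matrix.exists_vecMul_eq_zero_iff]
    refine ⟨Fin.cons (-1) φ, ?_, ?_⟩
    · intro h
      have := congrFun h 0
      simp at this
    · ext j
      simp [Matrix.vecMul, dotProduct, Fin.sum_univ_succ, M]
  rw [Matrix.det_succ_row_zero] at hM
  rw [← hM]
  refine Finset.sum_congr rfl fun j _ => ?_
  rw [permSign_eq_det]
  rfl

/-- The Levi-Civita symbol evaluated on a concatenation of two multi-indices. -/
def eps {n p q : ℕ} (h : p + q = n) (a : Fin p → Fin n) (idx : Fin q → Fin n) : ℝ :=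
  ((permSign fun i => Fin.append a idx (Fin.cast h.symm i) : ℤ) : ℝ)

lemma append_val {α : Type*} {p q : ℕ} (a : Fin p → α) (b : Fin q → α) (x : Fin (p+q)) :
    Fin.append a b x = if h : (x : ℕ) < p then a ⟨x, h⟩ else b ⟨x - p, by omega⟩ := by
  split_ifs with h
  · conv_lhs => rw [show x = Fin.castAdd q ⟨x, h⟩ from rfl]
    rw [Fin.append_left]
  · conv_lhs => rw [show x = Fin.natAdd p ⟨x - p, by omega⟩ from by ext; simp; omega]
    rw [Fin.append_right]

lemma succAbove_val {k : ℕ} (p : Fin (k+1)) (i : Fin k) :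
    ((p.succAbove i : Fin (k+1)) : ℕ) = if (i : ℕ) < p then (i : ℕ) else i + 1 := by
  simp only [Fin.succAbove, Fin.lt_def, Fin.val_castSucc]
  split_ifs <;> simp

lemma append_succAbove_right {α : Type*} {k s n : ℕ} (h : (k+1)+(s+1) = n)
    (h' : n + 1 = (k+1)+(s+2))
    (a : Fin (k+1) → α) (idx : Fin (s+2) → α) (m : Fin (s+2)) (i : Fin n) :
    Fin.append a idx (Fin.cast h' ((Fin.cast h'.symm (Fin.natAdd (k+1) m)).succAbove i))
      = Fin.append a (fun l => idx (m.succAbove l)) (Fin.cast h.symm i) := by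
  rw [append_val, append_val]
  simp only [Fin.val_cast, succAbove_val, Fin.val_natAdd]
  have := i.2
  by_cases h1 : (i : ℕ) < k + 1
  · have h2 : (i : ℕ) < k + 1 + m := by omega
    simp [h1, h2]
  · simp only [h1, dite_false]
    by_cases h2 : (i : ℕ) < k + 1 + m
    · simp only [h2, if_true, h1, dite_false]
      congr 1
      ext
      rw [succAbove_val]
      simp only
      rw [if_pos (by omega)]
    · have h3 : ¬ ((i : ℕ) + 1 < k + 1) := by omega
      simp only [h2, if_false, h3, dite_false]
      congr 1
      ext
      rw [succAbove_val]
      simp only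
      rw [if_neg (by omega)]
      omega

lemma append_succAbove_left {α : Type*} {k s n : ℕ} (h : k+(s+2) = n)
    (h' : n + 1 = (k+1)+(s+2))
    (b : α) (c : Fin k → α) (idx : Fin (s+2) → α) (j : Fin (k+1)) (i : Fin n) :
    Fin.append (j.insertNth b c : Fin (k+1) → α) idx
        (Fin.cast h' ((Fin.cast h'.symm (Fin.castAdd (s+2) j)).succAbove i))
      = Fin.append c idx (Fin.cast h.symm i) := by
  rw [append_val, append_val]
  simp only [Fin.val_cast, succAbove_val, Fin.val_castAdd]
  have := i.2
  have hj := j.2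
  by_cases h1 : (i : ℕ) < k
  · have h2 : (if (i : ℕ) < j then (i : ℕ) else i + 1) < k + 1 := by split_ifs <;> omega
    simp only [h1, h2, dite_true]
    have : (⟨if (i : ℕ) < j then (i : ℕ) else i + 1, h2⟩ : Fin (k+1))
        = j.succAbove ⟨i, h1⟩ := by
      ext; rw [succAbove_val]
    rw [this, Fin.insertNth_apply_succAbove]
  · have h2 : ¬ (i : ℕ) < j := by omega
    have h3 : ¬ ((i : ℕ) + 1 < k + 1) := by omega
    simp only [h1, h2, h3, dite_false, if_false]
    congr 1
    ext
    simp

lemma hodge_key {k s n : ℕ} (h1 : (k+1)+(s+1) = n) (h2 : k+(s+2) = n)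
    (D : Fin n → (Fin (k+1) → Fin n) → ℝ) (hD : ∀ b, AltP (D b)) (idx : Fin (s+2) → Fin n) :
    ∑ m : Fin (s+2), (-1 : ℝ) ^ (m : ℕ) *
      ∑ a, D (idx m) a * eps h1 a (fun l => idx (m.succAbove l))
    = (-1 : ℝ) ^ k * (k + 1) * ∑ c, (∑ b, D b (Fin.cons b c)) * eps h2 c idx := by
  have h' : n + 1 = (k+1)+(s+2) := by omega
  have key : ∀ a : Fin (k+1) → Fin n,
      ∑ j : Fin (k+1), (-1 : ℝ) ^ (j : ℕ) * D (a j) a *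
        ((permSign (fun i => Fin.append a idx
          (Fin.cast h' ((Fin.cast h'.symm (Fin.castAdd (s+2) j)).succAbove i))) : ℤ) : ℝ)
      + (-1 : ℝ) ^ (k+1) * ∑ m : Fin (s+2), (-1 : ℝ) ^ (m : ℕ) * D (idx m) a *
          eps h1 a (fun l => idx (m.succAbove l)) = 0 := by
    intro a
    have h0 := over_antisymm (fun i => Fin.append a idx (Fin.cast h' i)) (fun b => D b a)
    rw [← Equiv.sum_comp (finCongr h'.symm), Fin.sum_univ_add] at h0
    rw [← h0, Finset.mul_sum]
    congr 1
    · refine Finset.sum_congr rfl fun j _ => ?_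
      simp
    · refine Finset.sum_congr rfl fun m _ => ?_
      simp only [finCongr_apply, append_succAbove_right h1 h', eps]
      simp [pow_add]
      ring
  have key2 : ∑ a : Fin (k+1) → Fin n, ∑ j : Fin (k+1), (-1 : ℝ) ^ (j : ℕ) * D (a j) a *
        ((permSign (fun i => Fin.append a idx
          (Fin.cast h' ((Fin.cast h'.symm (Fin.castAdd (s+2) j)).succAbove i))) : ℤ) : ℝ)
      = (k+1) * ∑ c, (∑ b, D b (Fin.cons b c)) * eps h2 c idx := by
    rw [Finset.sum_comm]
    have : ∀ j : Fin (k+1), ∑ a : Fin (k+1) → Fin n, (-1 : ℝ) ^ (j : ℕ) * D (a j) a *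
        ((permSign (fun i => Fin.append a idx
          (Fin.cast h' ((Fin.cast h'.symm (Fin.castAdd (s+2) j)).succAbove i))) : ℤ) : ℝ)
        = ∑ c, (∑ b, D b (Fin.cons b c)) * eps h2 c idx := by
      intro j
      rw [← Equiv.sum_comp (Fin.insertNthEquiv (fun _ => Fin n) j), Fintype.sum_prod_type_right]
      refine Finset.sum_congr rfl fun c _ => ?_
      rw [Finset.sum_mul]
      refine Finset.sum_congr rfl fun b _ => ?_
      have := (hD b).insertNth j b c
      have hins : (Fin.insertNthEquiv (fun _ => Fin n) j) (b, c)
        = (j.insertNth b c : Fin (k+1) → Fin n) := rfl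
      rw [hins]
      simp only [Fin.insertNth_apply_same, append_succAbove_left h2 h', eps]
      rw [this]
    rw [Finset.sum_congr rfl fun j _ => this j]
    simp
  have key3 : (-1 : ℝ) ^ (k+1) * ∑ m : Fin (s+2), (-1 : ℝ) ^ (m : ℕ) *
      ∑ a, D (idx m) a * eps h1 a (fun l => idx (m.succAbove l))
      = - ((k+1) * ∑ c, (∑ b, D b (Fin.cons b c)) * eps h2 c idx) := by
    rw [← key2, eq_neg_iff_add_eq_zero, add_comm]
    simp_rw [Finset.mul_sum]
    rw [Finset.sum_comm (s := (Finset.univ : Finset (Fin (s+2)))), ← Finset.sum_add_distrib]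
    refine Finset.sum_eq_zero fun a _ => ?_
    rw [← key a, Finset.mul_sum]
    congr 1
    refine Finset.sum_congr rfl fun m _ => ?_
    ring
  have hs : (-1 : ℝ) ^ k * (-1 : ℝ) ^ k = 1 := by rw [← mul_pow]; simp
  linear_combination (-(-1 : ℝ) ^ k) * key3 -
    hs * (∑ m : Fin (s+2), (-1 : ℝ) ^ (m : ℕ) *
      ∑ a, D (idx m) a * eps h1 a (fun l => idx (m.succAbove l)))

lemma eps_comp {n p q : ℕ} (h : p + q = n) (a : Fin p → Fin n) (idx : Fin q → Fin n)
    (σ : Equiv.Perm (Fin p)) :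
    eps h (a ∘ σ) idx = ((Equiv.Perm.sign σ : ℤ) : ℝ) * eps h a idx := by
  subst h
  let τ : Equiv.Perm (Fin (p+q)) := finSumFinEquiv.permCongr (Equiv.Perm.sumCongr σ 1)
  have hτ : Equiv.Perm.sign τ = Equiv.Perm.sign σ := by
    simp [τ, Equiv.Perm.sign_permCongr, Equiv.Perm.sign_sumCongr]
  unfold eps
  rw [← hτ, ← permSign_comp_perm]
  congr 2
  ext i
  refine Fin.addCases (fun l => ?_) (fun l => ?_) i
  · simp [τ, Equiv.permCongr_apply]
  · simp [τ, Equiv.permCongr_apply]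

lemma eps_ne_zero {n p q : ℕ} (h : p + q = n) (a : Fin p → Fin n) (idx : Fin q → Fin n)
    (h0 : eps h a idx ≠ 0) :
    Function.Bijective (Fin.append a idx) := by
  subst h
  by_contra hb
  apply h0
  unfold eps permSign
  rw [dif_neg]
  · simp
  · exact hb

/-- The vanishing of the dual of an alternating `k`-index object implies its vanishing. -/
lemma dual_inj {n p q : ℕ} (h : p + q = n) (d : (Fin p → Fin n) → ℝ) (hd : AltP d)
    (hz : ∀ idx : Fin q → Fin n, ∑ c, d c * eps h c idx = 0) : ∀ c, d c = 0 := by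
  intro c
  by_cases hc : Function.Injective c
  swap
  · exact hd.eq_zero c hc
  -- choose a complementary multi-index
  obtain ⟨idx, hidx⟩ : ∃ idx : Fin q → Fin n, eps h c idx ^ 2 = 1 := by
    have hcard : ((Finset.univ.image c)ᶜ).card = q := by
      rw [Finset.card_compl, Finset.card_image_of_injective _ hc]
      simp; omega
    let e := ((Finset.univ.image c)ᶜ).orderEmbOfFin hcard
    refine ⟨e, ?_⟩
    have hinj : Function.Injective (Fin.append c e) := by
      rw [Fin.append_injective_iff]
      refine ⟨hc, e.injective, ?_⟩
      intro i j hij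
      have := Finset.orderEmbOfFin_mem _ hcard j
      simp only [Finset.mem_compl, Finset.mem_image, Finset.mem_univ, true_and, not_exists] at this
      exact this i hij
    subst h
    have hb : Function.Bijective (Fin.append c e) := Finite.injective_iff_bijective.1 hinj
    unfold eps permSign
    simp only [Fin.cast_refl, id]
    rw [dif_pos hb]
    rcases Int.units_eq_one_or (Equiv.Perm.sign (Equiv.ofBijective _ hb)) with h1 | h1 <;>
      rw [h1] <;> simp
  have h1 := hz idx
  have hterm : ∀ c' : Fin p → Fin n, 0 ≤ (d c' * eps h c' idx) * (d c * eps h c idx) := by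
    intro c'
    by_cases h0 : eps h c' idx = 0
    · simp [h0]
    have h00 : eps h c idx ≠ 0 := by
      intro h3; rw [h3] at hidx; simp at hidx
    have hb' := eps_ne_zero h c' idx h0
    have hb := eps_ne_zero h c idx h00
    have hr : ∀ i, ∃ j, c j = c' i := by
      intro i
      obtain ⟨x, hx⟩ := hb.2 (c' i)
      induction x using Fin.addCases with
      | left x => exact ⟨x, by simpa using hx⟩
      | right x =>
        exfalso
        rw [Fin.append_right] at hx
        have := hb'.1 (a₁ := Fin.natAdd p x) (a₂ := Fin.castAdd q i)
          (by rw [Fin.append_right, Fin.append_left, hx])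
        have := congrArg Fin.val this
        simp at this
        omega
    choose σ hσ using hr
    have hc' : Function.Injective c' := (Fin.append_injective_iff.1 hb'.1).1
    have hσi : Function.Injective σ := by
      intro i j hij
      apply hc'
      rw [← hσ, ← hσ, hij]
    have hσb := Finite.injective_iff_bijective.1 hσi
    have : c' = c ∘ (Equiv.ofBijective σ hσb) := by
      ext i; simp [hσ]
    rw [this, hd, eps_comp]
    set z : ℝ := ((Equiv.Perm.sign (Equiv.ofBijective σ hσb) : ℤ) : ℝ)
    have : z * d c * (z * eps h c idx) * (d c * eps h c idx)
      = (z * (d c * eps h c idx)) ^ 2 := by ring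
    rw [this]
    positivity
  have h2 : ∑ c', (d c' * eps h c' idx) * (d c * eps h c idx) = 0 := by
    rw [← Finset.sum_mul, h1, zero_mul]
  rw [Finset.sum_eq_zero_iff_of_nonneg fun c' _ => hterm c'] at h2
  have h3 := h2 c (Finset.mem_univ _)
  have h4 : d c ^ 2 * eps h c idx ^ 2 = 0 := by linear_combination h3
  rw [hidx, mul_one] at h4
  exact pow_eq_zero_iff (two_ne_zero) |>.1 h4

/-! ### The Kundt metric: determinant and inverse -/

/-- Transverse matrices, padded with the identity. -/
def Padded {n : ℕ} (h : Matrix (Fin n) (Fin n) ℝ) : Prop :=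
  ∀ a b : Fin n, ((a : ℕ) < 2 ∨ (b : ℕ) < 2) → h a b = (if a = b then 1 else 0)

lemma kundt_factor {n : ℕ} (i0 i1 : Fin n) (h0 : (i0 : ℕ) = 0) (h1 : (i1 : ℕ) = 1)
    (H : Pt n → ℝ) (W : Pt n → Fin n → ℝ) (hT : MetricField n) (x : Pt n)
    (hp : Padded (hT x)) :
    ∃ w : Fin n → ℝ, w i1 = 0 ∧ kundtMetric H W hT x =
      (1 + Matrix.vecMulVec (Pi.single i1 1) w).transpose *
        ((hT x).submatrix (Equiv.swap i0 i1) id) * (1 + Matrix.vecMulVec (Pi.single i1 1) w) := by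
  have h01 : i0 ≠ i1 := by intro h; rw [h, h1] at h0; omega
  refine ⟨fun b => if (b : ℕ) = 0 then H x else if (b : ℕ) = 1 then 0 else W x b, by simp [h1], ?_⟩
  set w : Fin n → ℝ := fun b => if (b : ℕ) = 0 then H x else if (b : ℕ) = 1 then 0 else W x b
    with hw
  set g0 := (hT x).submatrix (Equiv.swap i0 i1) id with hg0
  have e0 : ∀ b : Fin n, b = i0 ↔ (b : ℕ) = 0 := fun b => by rw [Fin.ext_iff, h0]
  have e1 : ∀ b : Fin n, b = i1 ↔ (b : ℕ) = 1 := fun b => by rw [Fin.ext_iff, h1]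
  have hg0b : ∀ b, g0 i1 b = if (b : ℕ) = 0 then 1 else 0 := by
    intro b
    simp only [hg0, Matrix.submatrix_apply, Equiv.swap_apply_right, id]
    rw [hp _ _ (Or.inl (by omega))]
    simp [eq_comm, ← e0]
  have hg0b' : ∀ b, g0 b i1 = if (b : ℕ) = 0 then 1 else 0 := by
    intro b
    simp only [hg0, Matrix.submatrix_apply, id]
    rw [hp _ _ (Or.inr (by omega))]
    have : (Equiv.swap i0 i1 b = i1) ↔ (b : ℕ) = 0 := by
      rw [← e0, ← Equiv.eq_symm_apply]
      simp
    simp only [this]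
  have expand : ∀ a b, ((1 + Matrix.vecMulVec (Pi.single i1 1) w).transpose * g0 *
      (1 + Matrix.vecMulVec (Pi.single i1 1) w)) a b
      = g0 a b + w a * g0 i1 b + (g0 a i1 + w a * g0 i1 i1) * w b := by
    intro a b
    have hl : ∀ c, ((1 + Matrix.vecMulVec (Pi.single i1 1) w).transpose * g0) a c
        = g0 a c + w a * g0 i1 c := by
      intro c
      rw [Matrix.transpose_add, Matrix.transpose_one, add_mul, one_mul, Matrix.add_apply]
      congr 1
      simp [Matrix.mul_apply, Matrix.vecMulVec_apply, Pi.single_apply]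
    rw [mul_add, mul_one, Matrix.add_apply, hl]
    congr 1
    rw [Matrix.mul_apply]
    simp only [hl]
    simp [Matrix.vecMulVec_apply, Pi.single_apply]
  ext a b
  rw [expand, hg0b, hg0b, hg0b']
  simp only [h1, one_ne_zero, if_false, mul_zero, add_zero]
  by_cases ha0 : (a : ℕ) = 0
  · have : g0 a b = if (b : ℕ) = 1 then 1 else 0 := by
      rw [(e0 a).2 ha0]
      simp only [hg0, Matrix.submatrix_apply, Equiv.swap_apply_left, id]
      rw [hp _ _ (Or.inl (by omega))]
      simp [eq_comm, ← e1]
    rw [this]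
    by_cases hb0 : (b : ℕ) = 0
    · simp [kundtMetric, hw, ha0, hb0]; ring
    by_cases hb1 : (b : ℕ) = 1
    · simp [kundtMetric, hw, ha0, hb1]
    · simp [kundtMetric, hw, ha0, hb0, hb1]
  by_cases ha1 : (a : ℕ) = 1
  · rw [(e1 a).2 ha1, hg0b]
    by_cases hb0 : (b : ℕ) = 0
    · simp [kundtMetric, hw, h1, hb0]
    · simp [kundtMetric, hw, h1, hb0]
  · have : g0 a b = hT x a b := by
      simp only [hg0, Matrix.submatrix_apply, id]
      rw [Equiv.swap_apply_of_ne_of_ne (by rwa [Ne, e0]) (by rwa [Ne, e1])]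
    rw [this]
    by_cases hb0 : (b : ℕ) = 0
    · rw [hp _ _ (Or.inr (by omega)), if_neg (by rintro rfl; omega)]
      simp [kundtMetric, hw, ha0, ha1, hb0]
    by_cases hb1 : (b : ℕ) = 1
    · rw [hp _ _ (Or.inr (by omega)), if_neg (by rintro rfl; omega)]
      simp [kundtMetric, ha0, ha1, hb1]
    · simp [kundtMetric, ha0, ha1, hb0, hb1]

lemma kundt_det {n : ℕ} (i0 i1 : Fin n) (h0 : (i0 : ℕ) = 0) (h1 : (i1 : ℕ) = 1)
    (H : Pt n → ℝ) (W : Pt n → Fin n → ℝ) (hT : MetricField n) (x : Pt n)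
    (hp : Padded (hT x)) : (kundtMetric H W hT x).det = - (hT x).det := by
  have h01 : i0 ≠ i1 := by intro h; rw [h, h1] at h0; omega
  obtain ⟨w, hw, hk⟩ := kundt_factor i0 i1 h0 h1 H W hT x hp
  have hU : (1 + Matrix.vecMulVec (Pi.single i1 1) w).det = 1 := by
    rw [Matrix.vecMulVec_eq Unit, Matrix.det_one_add_replicateCol_mul_replicateRow]
    simp [hw]
  rw [hk, Matrix.det_mul, Matrix.det_mul, Matrix.det_transpose, hU, Matrix.det_permute,
    Equiv.Perm.sign_swap h01]
  simp

lemma padded_inv {n : ℕ} {h : Matrix (Fin n) (Fin n) ℝ} (hp : Padded h) (hd : IsUnit h.det) :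
    Padded h⁻¹ := by
  intro a b hab
  rcases hab with ha | hb
  · have h1 : Matrix.vecMul (Pi.single a 1) h = Pi.single a 1 := by
      ext c
      rw [Matrix.single_one_vecMul]
      simp only [Matrix.row_apply]
      rw [hp _ _ (Or.inl ha)]
      simp [Pi.single_apply, eq_comm]
    have h2 := congrArg (fun v => Matrix.vecMul v h⁻¹) h1
    simp only [Matrix.vecMul_vecMul, Matrix.mul_nonsing_inv _ hd, Matrix.vecMul_one] at h2
    have h3 := congrFun h2 b
    rw [Matrix.single_one_vecMul] at h3
    simp only [Matrix.row_apply] at h3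
    rw [← h3]
    simp [Pi.single_apply, eq_comm]
  · have h1 : Matrix.mulVec h (Pi.single b 1) = Pi.single b 1 := by
      ext c
      rw [Matrix.mulVec_single_one]
      simp only [Matrix.col_apply]
      rw [hp _ _ (Or.inr hb)]
      simp [Pi.single_apply]
    have h2 := congrArg (fun v => Matrix.mulVec h⁻¹ v) h1
    simp only [Matrix.mulVec_mulVec, Matrix.nonsing_inv_mul _ hd, Matrix.one_mulVec] at h2
    have h3 := congrFun h2 a
    rw [Matrix.mulVec_single_one] at h3
    simp only [Matrix.col_apply] at h3
    rw [← h3]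
    simp [Pi.single_apply]

lemma kundt_inv_zero {n : ℕ} (i0 i1 : Fin n) (h0 : (i0 : ℕ) = 0) (h1 : (i1 : ℕ) = 1)
    (H : Pt n → ℝ) (W : Pt n → Fin n → ℝ) (hT : MetricField n) (x : Pt n)
    (hp : Padded (hT x)) (hd : IsUnit (hT x).det) (a : Fin n) :
    (kundtMetric H W hT x)⁻¹ a i0 = if a = i1 then 1 else 0 := by
  have hdk : IsUnit (kundtMetric H W hT x).det := by
    rw [kundt_det i0 i1 h0 h1 H W hT x hp]; exact hd.neg
  have e1 : Matrix.mulVec (kundtMetric H W hT x) (Pi.single i1 1) = Pi.single i0 1 := by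
    ext c
    rw [Matrix.mulVec_single_one]
    simp only [Matrix.col_apply, Pi.single_apply, Fin.ext_iff, h0]
    by_cases hc : (c : ℕ) = 0
    · simp [kundtMetric, h1, hc]
    · simp [kundtMetric, h1, hc]
  have h2 := congrArg (fun v => Matrix.mulVec (kundtMetric H W hT x)⁻¹ v) e1
  simp only [Matrix.mulVec_mulVec, Matrix.nonsing_inv_mul _ hdk, Matrix.one_mulVec] at h2
  have h3 := congrFun h2 a
  rw [Matrix.mulVec_single_one] at h3
  simp only [Matrix.col_apply] at h3
  rw [← h3]
  simp [Pi.single_apply]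

lemma kundt_inv_zero' {n : ℕ} (i0 i1 : Fin n) (h0 : (i0 : ℕ) = 0) (h1 : (i1 : ℕ) = 1)
    (H : Pt n → ℝ) (W : Pt n → Fin n → ℝ) (hT : MetricField n) (x : Pt n)
    (hp : Padded (hT x)) (hd : IsUnit (hT x).det) (a : Fin n) :
    (kundtMetric H W hT x)⁻¹ i0 a = if a = i1 then 1 else 0 := by
  have hdk : IsUnit (kundtMetric H W hT x).det := by
    rw [kundt_det i0 i1 h0 h1 H W hT x hp]; exact hd.neg
  have e1 : Matrix.vecMul (Pi.single i1 1) (kundtMetric H W hT x) = Pi.single i0 1 := by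
    ext c
    rw [Matrix.single_one_vecMul]
    simp only [Matrix.row_apply, Pi.single_apply, Fin.ext_iff, h0]
    by_cases hc : (c : ℕ) = 0
    · simp [kundtMetric, h1, hc]
    · simp [kundtMetric, h1, hc]
  have h2 := congrArg (fun v => Matrix.vecMul v (kundtMetric H W hT x)⁻¹) e1
  simp only [Matrix.vecMul_vecMul, Matrix.mul_nonsing_inv _ hdk, Matrix.vecMul_one] at h2
  have h3 := congrFun h2 a
  rw [Matrix.single_one_vecMul] at h3
  simp only [Matrix.row_apply] at h3
  rw [← h3]
  simp [Pi.single_apply]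

/-- Away from the `r` row, the transverse columns of the inverse of the Kundt metric are
those of the inverse of the transverse metric. -/
lemma kundt_inv_trans {n : ℕ} (i0 i1 : Fin n) (h0 : (i0 : ℕ) = 0) (h1 : (i1 : ℕ) = 1)
    (H : Pt n → ℝ) (W : Pt n → Fin n → ℝ) (hT : MetricField n) (x : Pt n)
    (hp : Padded (hT x)) (hd : IsUnit (hT x).det) (a b : Fin n) (ha : a ≠ i1)
    (hb : 2 ≤ (b : ℕ)) :
    (kundtMetric H W hT x)⁻¹ a b = (hT x)⁻¹ a b := by
  have e0 : ∀ b : Fin n, b = i0 ↔ (b : ℕ) = 0 := fun b => by rw [Fin.ext_iff, h0]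
  have e1 : ∀ b : Fin n, b = i1 ↔ (b : ℕ) = 1 := fun b => by rw [Fin.ext_iff, h1]
  have hdk : IsUnit (kundtMetric H W hT x).det := by
    rw [kundt_det i0 i1 h0 h1 H W hT x hp]; exact hd.neg
  by_cases ha0 : a = i0
  · subst ha0
    rw [kundt_inv_zero' a i1 h0 h1 H W hT x hp hd, padded_inv hp hd _ _ (Or.inl (by omega)),
      if_neg (by rw [e1]; omega), if_neg (by rintro rfl; omega)]
  have ha2 : 2 ≤ (a : ℕ) := by rw [e0] at ha0; rw [Ne, e1] at ha; omega
  set r : Fin n → ℝ := fun c => if 2 ≤ (c : ℕ) then (kundtMetric H W hT x)⁻¹ a c else 0 with hr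
  have key : Matrix.vecMul r (hT x) = Pi.single a 1 := by
    ext β
    by_cases hβ : 2 ≤ (β : ℕ)
    · have h3 : ((kundtMetric H W hT x)⁻¹ * kundtMetric H W hT x) a β = (Pi.single a 1 : Fin n → ℝ) β := by
        rw [Matrix.nonsing_inv_mul _ hdk, Matrix.one_apply]
        simp [Pi.single_apply, eq_comm]
      rw [← h3, Matrix.mul_apply, Matrix.vecMul, dotProduct]
      refine Finset.sum_congr rfl fun c _ => ?_
      by_cases hc0 : (c : ℕ) = 0
      · rw [(e0 c).2 hc0, kundt_inv_zero i0 i1 h0 h1 H W hT x hp hd, if_neg ha]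
        simp [hr, h0]
      by_cases hc1 : (c : ℕ) = 1
      · have hβ0 : (β : ℕ) ≠ 0 := by omega
        simp [hr, kundtMetric, hc1, hβ0]
      · have hc2 : 2 ≤ (c : ℕ) := by omega
        have hβ0 : (β : ℕ) ≠ 0 := by omega
        have hβ1 : (β : ℕ) ≠ 1 := by omega
        simp [hr, kundtMetric, hc0, hc1, hc2, hβ0, hβ1]
    · rw [Pi.single_apply, if_neg (by rintro rfl; omega), Matrix.vecMul, dotProduct]
      refine Finset.sum_eq_zero fun c _ => ?_
      by_cases hc : 2 ≤ (c : ℕ)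
      · rw [hp _ _ (Or.inr (by omega)), if_neg (by rintro rfl; omega), mul_zero]
      · simp [hr, hc]
  have h2 := congrArg (fun v => Matrix.vecMul v (hT x)⁻¹) key
  simp only [Matrix.vecMul_vecMul, Matrix.mul_nonsing_inv _ hd, Matrix.vecMul_one] at h2
  have h3 := congrFun h2 b
  rw [Matrix.single_one_vecMul] at h3
  simp only [Matrix.row_apply] at h3
  rw [← h3]
  simp [hr, hb]

/-! ### Raising indices -/

lemma raiseAll_alt {n k : ℕ} (g : MetricField n) (T : TensorField n k) (x : Pt n)
    (hT : AltP (T x)) : AltP (raiseAll g T x) := by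
  intro idx σ
  unfold raiseAll
  rw [← Equiv.sum_comp (Equiv.arrowCongr σ.symm (Equiv.refl (Fin n))), Finset.mul_sum]
  refine Finset.sum_congr rfl fun j _ => ?_
  have h1 : (Equiv.arrowCongr σ.symm (Equiv.refl (Fin n))) j = j ∘ σ := by
    ext i; simp
  rw [h1, hT]
  simp only [Function.comp]
  rw [Equiv.prod_comp σ (fun m => (g x)⁻¹ (idx m) (j m))]
  ring

lemma raise_duWedge {n q : ℕ} (i0 : Fin n) (h0 : (i0 : ℕ) = 0) (g : MetricField n)
    (f : TensorField n q) (x : Pt n) :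
    raiseAll g (duWedge f) x = wed (fun b c => (g x)⁻¹ b i0 * raiseAll g f x c) := by
  ext a
  unfold raiseAll duWedge wed
  simp_rw [Finset.mul_sum]
  rw [Finset.sum_comm]
  refine Finset.sum_congr rfl fun l _ => ?_
  rw [← Equiv.sum_comp (Fin.insertNthEquiv (fun _ => Fin n) l), Fintype.sum_prod_type_right]
  refine Finset.sum_congr rfl fun c _ => ?_
  have hins : ∀ b, (Fin.insertNthEquiv (fun _ => Fin n) l) (b, c)
        = (l.insertNth b c : Fin (q+1) → Fin n) := fun b => rfl
  simp only [hins, Fin.insertNth_apply_same, Fin.insertNth_apply_succAbove,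
    Fin.prod_univ_succAbove _ l]
  rw [Finset.sum_eq_single i0]
  · simp [h0]; ring
  · intro b _ hb
    have : (b : ℕ) ≠ 0 := by rw [← h0]; exact fun h => hb (Fin.ext h)
    simp [this]
  · simp

lemma altP_mul {n k : ℕ} {t : (Fin k → Fin n) → ℝ} (h : AltP t) (z : ℝ) :
    AltP (fun c => z * t c) := by
  intro idx σ
  simp only [h idx σ]
  ring

lemma raise_kundt {n q : ℕ} (i0 i1 : Fin n) (h0 : (i0 : ℕ) = 0) (h1 : (i1 : ℕ) = 1)
    (H : Pt n → ℝ) (W : Pt n → Fin n → ℝ) (hT : MetricField n) (x : Pt n)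
    (hp : Padded (hT x)) (hd : IsUnit (hT x).det) (f : TensorField n q)
    (hf_alt : AltP (f x))
    (hf_tr : ∀ (v : Fin q → Fin n), (∃ i, (v i : ℕ) < 2) → f x v = 0) :
    raiseAll (kundtMetric H W hT) (duWedge f) x
      = wed (fun b c => (if b = i1 then 1 else 0) * raiseAll hT f x c) := by
  rw [raise_duWedge i0 h0]
  simp only [kundt_inv_zero i0 i1 h0 h1 H W hT x hp hd]
  ext a
  by_cases ha : Function.Injective a
  swap
  · rw [(wed_alt fun b => altP_mul (raiseAll_alt _ _ _ hf_alt) _).eq_zero a ha,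
      (wed_alt fun b => altP_mul (raiseAll_alt _ _ _ hf_alt) _).eq_zero a ha]
  unfold wed
  refine Finset.sum_congr rfl fun m _ => ?_
  by_cases hm : a m = i1
  swap
  · simp [hm]
  suffices hs : raiseAll (kundtMetric H W hT) f x (fun i => a (m.succAbove i))
      = raiseAll hT f x (fun i => a (m.succAbove i)) by
    simp only [hs]
  unfold raiseAll
  refine Finset.sum_congr rfl fun j _ => ?_
  by_cases hj : ∃ i, (j i : ℕ) < 2
  · rw [hf_tr j hj]; simp
  push Not at hj
  congr 1
  refine Finset.prod_congr rfl fun i _ => ?_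
  refine kundt_inv_trans i0 i1 h0 h1 H W hT x hp hd _ _ ?_ (hj i)
  rw [← hm]
  exact fun h => Fin.succAbove_ne m i (ha h)

/-- Raising with a padded metric preserves transversality. -/
lemma raise_trans {n q : ℕ} (hT : MetricField n) (x : Pt n)
    (hp : Padded (hT x)) (hd : IsUnit (hT x).det) (f : TensorField n q)
    (hf_tr : ∀ (v : Fin q → Fin n), (∃ i, (v i : ℕ) < 2) → f x v = 0)
    (v : Fin q → Fin n) (hv : ∃ i, (v i : ℕ) < 2) : raiseAll hT f x v = 0 := by
  obtain ⟨i, hi⟩ := hv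
  unfold raiseAll
  refine Finset.sum_eq_zero fun j _ => ?_
  by_cases hj : (j i : ℕ) < 2
  · rw [hf_tr j ⟨i, hj⟩, mul_zero]
  · rw [Finset.prod_eq_zero (Finset.mem_univ i), zero_mul]
    rw [padded_inv hp hd _ _ (Or.inl hi), if_neg]
    intro h
    rw [h] at hi
    exact hj hi

/-! ### Differentiability and partial derivatives -/

lemma diff_prod {n : ℕ} {ι : Type*} (u : Finset ι) (F : ι → Pt n → ℝ)
    (hF : ∀ i, Differentiable ℝ (F i)) : Differentiable ℝ fun y => ∏ i ∈ u, F i y := by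
  classical
  induction u using Finset.induction_on with
  | empty => simp
  | insert a u ha ih =>
    simp only [Finset.prod_insert ha]
    exact (hF a).mul ih

lemma diff_det {n k : ℕ} (M : Pt n → Matrix (Fin k) (Fin k) ℝ)
    (h : ∀ a b, Differentiable ℝ fun y => M y a b) : Differentiable ℝ fun y => (M y).det := by
  simp only [Matrix.det_apply']
  have : ∀ (σ : Equiv.Perm (Fin k)), Differentiable ℝ fun y => ∏ i, M y (σ i) i :=
    fun σ => diff_prod _ _ fun i => h _ _
  exact Differentiable.fun_sum fun σ _ => (this σ).const_mul _

lemma diff_inv {n : ℕ} (M : MetricField n)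
    (h : ∀ a b, Differentiable ℝ fun y => M y a b) (hd : ∀ y, (M y).det ≠ 0) (a b : Fin n) :
    Differentiable ℝ fun y => (M y)⁻¹ a b := by
  have : (fun y => (M y)⁻¹ a b) = fun y => ((M y).det)⁻¹ * ((M y).updateRow b (Pi.single a 1)).det := by
    ext y
    rw [Matrix.inv_def, Matrix.smul_apply, Matrix.adjugate_apply, Ring.inverse_eq_inv', smul_eq_mul]
  rw [this]
  refine ((diff_det M h).inv hd).mul (diff_det _ ?_)
  intro c d
  by_cases hc : c = b
  · subst hc; simp
  · simpa [Matrix.updateRow_ne hc] using h c d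

lemma diff_raise {n q : ℕ} (hT : MetricField n) (f : TensorField n q)
    (h : ∀ a b, Differentiable ℝ fun y => hT y a b) (hd : ∀ y, (hT y).det ≠ 0)
    (hf : ∀ c, Differentiable ℝ fun y => f y c) (c : Fin q → Fin n) :
    Differentiable ℝ fun y => raiseAll hT f y c := by
  unfold raiseAll
  exact Differentiable.fun_sum fun j _ =>
    (diff_prod _ _ fun i => diff_inv hT h hd _ _).mul (hf j)

lemma pd_const_mul {n : ℕ} (z : ℝ) (F : Pt n → ℝ) (hF : Differentiable ℝ F) (a : Fin n) (x : Pt n) :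
    pd (fun y => z * F y) a x = z * pd F a x := by
  unfold pd
  rw [fderiv_const_mul (hF x)]
  simp

lemma pd_sum {n : ℕ} {ι : Type*} (u : Finset ι) (F : ι → Pt n → ℝ)
    (hF : ∀ i, Differentiable ℝ (F i)) (a : Fin n) (x : Pt n) :
    pd (fun y => ∑ i ∈ u, F i y) a x = ∑ i ∈ u, pd (F i) a x := by
  unfold pd
  rw [fderiv_fun_sum fun i _ => hF i x]
  simp

lemma pd_zero {n : ℕ} (a : Fin n) (x : Pt n) : pd (fun _ => (0:ℝ)) a x = 0 := by
  unfold pd; simp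

lemma pd_indep {n : ℕ} (F : Pt n → ℝ) (hF : Differentiable ℝ F) (hr : IndepOfR F)
    (i1 : Fin n) (h1 : (i1 : ℕ) = 1) (x : Pt n) : pd F i1 x = 0 := by
  unfold pd
  rw [← (hF x).lineDeriv_eq_fderiv, lineDeriv]
  have : (fun t : ℝ => F (x + t • Pi.single i1 1)) = fun _ => F x := by
    ext t
    apply hr
    intro i hi
    have : i ≠ i1 := by rintro rfl; exact hi h1
    simp [this]
  rw [this]
  simp

lemma altP_cons {n k : ℕ} (D : Fin n → (Fin (k+1) → Fin n) → ℝ) (hD : ∀ b, AltP (D b)) :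
    AltP (fun c : Fin k → Fin n => ∑ b, D b (Fin.cons b c)) := by
  intro c σ
  simp only [Finset.mul_sum]
  refine Finset.sum_congr rfl fun b _ => ?_
  have : (Fin.cons b (c ∘ σ) : Fin (k+1) → Fin n)
      = (Fin.cons b c : Fin (k+1) → Fin n) ∘ (Equiv.Perm.decomposeFin.symm (0, σ)) := by
    ext i
    refine Fin.cases ?_ (fun i => ?_) i <;> simp
  rw [this, hD, Equiv.Perm.decomposeFin.symm_sign]
  simp

/-! ### Wedge with a coordinate differential -/

lemma wedI_zero {n k : ℕ} (i : Fin n) (S : (Fin k → Fin n) → ℝ) (v : Fin (k+1) → Fin n)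
    (hv : ∀ m, v m ≠ i) :
    wed (fun b c => (if b = i then (1:ℝ) else 0) * S c) v = 0 := by
  unfold wed
  refine Finset.sum_eq_zero fun m _ => ?_
  simp [hv m]

lemma wedI_cons {n k : ℕ} (i : Fin n) (S : (Fin k → Fin n) → ℝ) (v : Fin k → Fin n)
    (hv : ∀ m, v m ≠ i) :
    wed (fun b c => (if b = i then (1:ℝ) else 0) * S c) (Fin.cons i v) = S v := by
  unfold wed
  rw [Fin.sum_univ_succ]
  simp [hv]

lemma duWedge_eq {n q : ℕ} (i0 : Fin n) (h0 : (i0 : ℕ) = 0) (f : TensorField n q) (x : Pt n) :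
    duWedge f x = wed (fun b c => (if b = i0 then (1:ℝ) else 0) * f x c) := by
  ext idx
  unfold duWedge wed
  refine Finset.sum_congr rfl fun m _ => ?_
  simp only [Fin.ext_iff, h0]
  ring

lemma exists_front {n k : ℕ} {t : (Fin (k+1) → Fin n) → ℝ} (ht : AltP t) (i : Fin n)
    (hz : ∀ v : Fin k → Fin n, (∀ m, v m ≠ i) → t (Fin.cons i v) = 0)
    (idx : Fin (k+1) → Fin n) (m : Fin (k+1)) (hm : idx m = i) : t idx = 0 := by
  by_cases hi : Function.Injective idx
  swap
  · exact ht.eq_zero idx hi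
  have h1 := ht idx (Equiv.swap 0 m)
  have h2 : idx ∘ Equiv.swap 0 m
      = (Fin.cons i (fun l => idx (Equiv.swap 0 m l.succ)) : Fin (k+1) → Fin n) := by
    ext l
    refine Fin.cases ?_ (fun l => ?_) l
    · simp [hm]
    · simp
  rw [h2, hz] at h1
  · rcases Int.units_eq_one_or (Equiv.Perm.sign (Equiv.swap 0 m)) with h3 | h3 <;>
      rw [h3] at h1 <;> simpa using h1.symm
  · intro l hl
    rw [← hm] at hl
    have h3 := hi hl
    rw [Equiv.swap_apply_eq_iff, Equiv.swap_apply_right] at h3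
    exact Fin.succ_ne_zero _ h3

lemma altP_pd {n k : ℕ} (T : TensorField n k) (hd : ∀ c, Differentiable ℝ fun y => T y c)
    (ha : ∀ y, AltP (T y)) (b : Fin n) (x : Pt n) : AltP (fun c => pd (fun y => T y c) b x) := by
  intro idx σ
  simp only [ha _ idx σ]
  rw [pd_const_mul _ _ (hd idx)]

lemma diff_wedI {n k : ℕ} (i : Fin n) (S : TensorField n k)
    (hd : ∀ c, Differentiable ℝ fun y => S y c) (a : Fin (k+1) → Fin n) :
    Differentiable ℝ fun y => wed (fun b c => (if b = i then (1:ℝ) else 0) * S y c) a := by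
  unfold wed
  exact Differentiable.fun_sum fun m _ => ((hd _).const_mul _).const_mul _

/-! ### The closedness equation -/

lemma closed_iff {n q : ℕ} (i0 i1 : Fin n) (h0 : (i0 : ℕ) = 0) (h1 : (i1 : ℕ) = 1)
    (f : TensorField n q) (hd : ∀ c, Differentiable ℝ fun y => f y c) (hf_alt : IsAlternating f)
    (hf_tr : ∀ (x : Pt n) (v : Fin q → Fin n), (∃ i, (v i : ℕ) < 2) → f x v = 0)
    (hf_r : IndepOfR f) :
    (∀ x idx, extD (duWedge f) x idx = 0) ↔ TransClosed f := by
  have e0 : ∀ b : Fin n, b = i0 ↔ (b : ℕ) = 0 := fun b => by rw [Fin.ext_iff, h0]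
  have hF : duWedge f = fun x => wed (fun b c => (if b = i0 then (1:ℝ) else 0) * f x c) :=
    funext fun x => duWedge_eq i0 h0 f x
  have hcons : ∀ x (v : Fin (q+1) → Fin n), (∀ m, v m ≠ i0) →
      extD (duWedge f) x (Fin.cons i0 v) = - extD f x v := by
    intro x v hv
    unfold extD
    rw [hF, Fin.sum_univ_succ, ← Finset.sum_neg_distrib]
    have hz : (fun y => wed (fun b c => (if b = i0 then (1:ℝ) else 0) * f y c)
        fun i => (Fin.cons i0 v : Fin (q+2) → Fin n) (Fin.succAbove 0 i)) = fun _ => 0 := by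
      ext y
      apply wedI_zero
      intro m
      simpa using hv m
    rw [hz, pd_zero, mul_zero, zero_add]
    refine Finset.sum_congr rfl fun m _ => ?_
    have hc : (fun i => (Fin.cons i0 v : Fin (q+2) → Fin n) (m.succ.succAbove i))
        = (Fin.cons i0 (fun l => v (m.succAbove l)) : Fin (q+1) → Fin n) := by
      ext l
      refine Fin.cases ?_ (fun l => ?_) l <;> simp
    rw [hc]
    have : (fun y => wed (fun b c => (if b = i0 then (1:ℝ) else 0) * f y c)
        (Fin.cons i0 (fun l => v (m.succAbove l)) : Fin (q+1) → Fin n))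
        = fun y => f y (fun l => v (m.succAbove l)) := by
      ext y
      exact wedI_cons i0 (f y) _ fun l => hv _
    rw [this]
    simp [pow_succ]
  constructor
  · intro h x v hv
    have h2 := hcons x v (fun m => by rw [Ne, e0]; have := hv m; omega)
    rw [h] at h2
    have h3 : extD f x v = 0 := by linarith
    exact h3
  · intro h x idx
    have halt : AltP (extD (duWedge f) x) := by
      refine wed_alt (φ := fun b c => pd (fun y => duWedge f y c) b x) fun b => altP_pd _ ?_ ?_ b x
      · rw [hF]; exact diff_wedI i0 f hd
      · rw [hF]; exact fun y => wed_alt fun b => altP_mul (hf_alt y) _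
    by_cases hm : ∃ m, idx m = i0
    · obtain ⟨m, hm⟩ := hm
      refine exists_front halt i0 ?_ idx m hm
      intro v hv
      rw [hcons x v hv, neg_eq_zero]
      by_cases h2 : ∀ i, 2 ≤ (v i : ℕ)
      · exact h x v h2
      push Not at h2
      obtain ⟨i, hi⟩ := h2
      have hi1 : v i = i1 := by
        ext
        have := hv i
        rw [Ne, e0] at this
        omega
      unfold extD
      refine Finset.sum_eq_zero fun m _ => ?_
      by_cases hmi : m = i
      · subst hmi
        rw [hi1, pd_indep _ (hd _) (fun y y' hy => by rw [hf_r y y' hy]) i1 h1, mul_zero]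
      · obtain ⟨l, hl⟩ := Fin.exists_succAbove_eq (Ne.symm hmi)
        have : (fun y => f y fun i => v (m.succAbove i)) = fun _ => 0 := by
          ext y
          exact hf_tr y _ ⟨l, by rw [hl]; exact hi⟩
        rw [this, pd_zero, mul_zero]
    · push Not at hm
      unfold extD
      rw [hF]
      refine Finset.sum_eq_zero fun m _ => ?_
      have : (fun y => wed (fun b c => (if b = i0 then (1:ℝ) else 0) * f y c)
        fun i => idx (m.succAbove i)) = fun _ => 0 := by
        ext y
        exact wedI_zero _ _ _ fun l => hm _
      rw [this, pd_zero, mul_zero]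

/-! ### The co-closedness equation -/

lemma div_iff {n k : ℕ} (i1 : Fin n) (h1 : (i1 : ℕ) = 1)
    (S : TensorField n (k+1)) (hd : ∀ c, Differentiable ℝ fun y => S y c)
    (ha : ∀ y, AltP (S y))
    (htr : ∀ (x : Pt n) (v : Fin (k+1) → Fin n), (∃ i, (v i : ℕ) < 2) → S x v = 0)
    (hr : IndepOfR S) (x : Pt n) :
    (∀ c : Fin (k+1) → Fin n, ∑ b, pd (fun y =>
      wed (fun b c => (if b = i1 then (1:ℝ) else 0) * S y c) (Fin.cons b c)) b x = 0) ↔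
    ∀ v : Fin (k+1) → Fin n, ∑ b, pd (fun y => S y (Function.update v 0 b)) b x = 0 := by
  set T : TensorField n (k+2) := fun y =>
    wed (fun b c => (if b = i1 then (1:ℝ) else 0) * S y c) with hT
  have hTa : ∀ y, AltP (T y) := fun y => wed_alt fun b => altP_mul (ha y) _
  have hTd : ∀ c, Differentiable ℝ fun y => T y c := diff_wedI i1 S hd
  have hpr : ∀ c, pd (fun y => S y c) i1 x = 0 := fun c =>
    pd_indep _ (hd c) (fun y y' hy => congrFun (hr y y' hy) c) i1 h1 x
  have hfront : ∀ v : Fin k → Fin n, (∀ m, v m ≠ i1) →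
      ∑ b, pd (fun y => T y (Fin.cons b (Fin.cons i1 v : Fin (k+1) → Fin n))) b x
      = - ∑ b, pd (fun y => S y (Fin.cons b v)) b x := by
    intro v hv
    rw [← Finset.sum_neg_distrib]
    refine Finset.sum_congr rfl fun b _ => ?_
    by_cases hb : b = i1
    · rw [hb, hpr]
      have : (fun y => T y (Fin.cons i1 (Fin.cons i1 v : Fin (k+1) → Fin n))) = fun _ => 0 := by
        ext y
        apply (hTa y).eq_zero
        intro hi
        have := @hi 0 1 (by simp)
        simp at this
      rw [this, pd_zero, neg_zero]
    · have hsw : (Fin.cons b (Fin.cons i1 v : Fin (k+1) → Fin n) : Fin (k+2) → Fin n)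
          = (Fin.cons i1 (Fin.cons b v : Fin (k+1) → Fin n) : Fin (k+2) → Fin n) ∘
            Equiv.swap 0 1 := by
        ext l
        refine Fin.cases ?_ (fun l => Fin.cases ?_ (fun l => ?_) l) l
        · simp
        · simp
        · have : Equiv.swap (0 : Fin (k+2)) 1 l.succ.succ = l.succ.succ :=
            Equiv.swap_apply_of_ne_of_ne (Fin.succ_ne_zero _) (by simp [Fin.ext_iff])
          simp [this]
      have : (fun y => T y (Fin.cons b (Fin.cons i1 v : Fin (k+1) → Fin n)))
          = fun y => (-1) * S y (Fin.cons b v) := by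
        ext y
        rw [hsw, (hTa y).swap _ (by simp), hT]
        simp only
        rw [wedI_cons i1 (S y)]
        · ring
        · intro m
          refine Fin.cases ?_ (fun m => ?_) m
          · simpa using hb
          · simpa using hv m
      rw [this, pd_const_mul _ _ (hd _)]
      ring
  have hupd : ∀ (v : Fin (k+1) → Fin n) b,
      Function.update v 0 b = (Fin.cons b (Fin.tail v) : Fin (k+1) → Fin n) := by
    intro v b
    ext l
    refine Fin.cases ?_ (fun l => ?_) l
    · simp
    · simp [Fin.tail]
  constructor
  · intro h v
    simp only [hupd]
    by_cases hv : ∃ m, Fin.tail v m = i1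
    · obtain ⟨m, hm⟩ := hv
      refine Finset.sum_eq_zero fun b _ => ?_
      have : (fun y => S y (Fin.cons b (Fin.tail v))) = fun _ => 0 := by
        ext y
        refine htr y _ ⟨m.succ, ?_⟩
        rw [Fin.cons_succ, hm]; omega
      rw [this, pd_zero]
    · push Not at hv
      have h2 := hfront _ hv
      rw [h] at h2
      linarith
  · intro h c
    by_cases hc : ∃ m, c m = i1
    · obtain ⟨m, hm⟩ := hc
      refine exists_front (t := fun c => ∑ b, pd (fun y => T y (Fin.cons b c)) b x)
        (altP_cons (fun b a => pd (fun y => T y a) b x) fun b => altP_pd T hTd hTa b x)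
        i1 ?_ c m hm
      intro v hv
      rw [hfront v hv]
      have h2 := h (Fin.cons i1 v)
      simp only [hupd, Fin.tail_cons] at h2
      rw [h2, neg_zero]
    · push Not at hc
      refine Finset.sum_eq_zero fun b _ => ?_
      by_cases hb : b = i1
      · have : (fun y => T y (Fin.cons b c)) = fun y => S y c := by
          ext y
          rw [hb]
          exact wedI_cons i1 (S y) c hc
        rw [this, hb, hpr]
      · have : (fun y => T y (Fin.cons b c)) = fun _ => 0 := by
          ext y
          refine wedI_zero i1 (S y) _ fun m => ?_
          refine Fin.cases ?_ (fun m => ?_) m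
          · simpa using hb
          · simpa using hc m
        rw [this, pd_zero]

lemma coclosed_dual {n k s : ℕ} (h1 : (k+1)+(s+1) = n)
    (T : TensorField n (k+1)) (hd : ∀ c, Differentiable ℝ fun y => T y c)
    (ha : ∀ y, AltP (T y)) (z : ℝ) (hz : z ≠ 0) (x : Pt n) :
    (∀ idx, extD (fun y (idx : Fin (s+1) → Fin n) => z * ∑ a, T y a * eps h1 a idx) x idx = 0) ↔
    ∀ c : Fin k → Fin n, ∑ b, pd (fun y => T y (Fin.cons b c)) b x = 0 := by
  have h2 : k + (s+2) = n := by omega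
  have hDa : ∀ b, AltP (fun c => pd (fun y => T y c) b x) := fun b => altP_pd T hd ha b x
  have key : ∀ idx, extD (fun y (idx : Fin (s+1) → Fin n) => z * ∑ a, T y a * eps h1 a idx) x idx
      = z * ((-1 : ℝ) ^ k * (k + 1)) *
        ∑ c : Fin k → Fin n, (∑ b, pd (fun y => T y (Fin.cons b c)) b x) * eps h2 c idx := by
    intro idx
    rw [mul_assoc, ← hodge_key h1 h2 (fun b a => pd (fun y => T y a) b x) hDa idx, Finset.mul_sum]
    unfold extD
    refine Finset.sum_congr rfl fun m _ => ?_
    have hda : ∀ a, Differentiable ℝ fun y => T y a * eps h1 a (fun i => idx (m.succAbove i)) :=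
      fun a => (hd a).mul_const _
    rw [pd_const_mul _ _ (Differentiable.fun_sum fun a _ => hda a), pd_sum _ _ hda]
    have : ∀ a, pd (fun y => T y a * eps h1 a (fun i => idx (m.succAbove i))) (idx m) x
        = pd (fun y => T y a) (idx m) x * eps h1 a (fun i => idx (m.succAbove i)) := by
      intro a
      simp only [mul_comm _ (eps h1 a _)]
      rw [pd_const_mul _ _ (hd a)]
    simp only [this]
    ring
  have hne : z * ((-1 : ℝ) ^ k * (k + 1)) ≠ 0 := by
    refine mul_ne_zero hz (mul_ne_zero (pow_ne_zero _ (by norm_num)) ?_)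
    positivity
  constructor
  · intro h
    refine dual_inj h2 _ (altP_cons (fun b a => pd (fun y => T y a) b x) hDa) ?_
    intro idx
    have h3 := h idx
    rw [key] at h3
    exact (mul_eq_zero.1 h3).resolve_left hne
  · intro h idx
    rw [key]
    simp [h]


/-- for a VSI `p`-form `F = du ∧ f` (with `p = q+1`) on a degenerate
Kundt background, the source-free Maxwell equations `dF = 0 = d*F` are equivalent to
`f` being closed and co-closed (harmonic) in the transverse Riemannian geometry. -/
theorem maxwell_reduces_to_transverse {n q s : ℕ} [NeZero n] [NeZero q]
    (hn : (q+1) + (s+1) = n)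
    (D : DegKundtData n) (hD : D.Regular)
    (f : TensorField n q) (hf_sm : IsSmoothT f) (hf_alt : IsAlternating f)
    (hf_tr : ∀ (x : Pt n) (v : Fin q → Fin n), (∃ i, (v i : ℕ) < 2) → f x v = 0)
    (hf_r : IndepOfR f) :
    MaxwellEqs hn D.metric (duWedge f) ↔ (TransClosed f ∧ TransCoclosed D.hT f) := by
  obtain ⟨k, rfl⟩ := Nat.exists_eq_succ_of_ne_zero (NeZero.ne q)
  obtain ⟨⟨hpad, hsymm, hsm, hTr, hpos⟩, -⟩ := hD
  have hn3 : 3 ≤ n := by omega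
  have hdpos : ∀ y, 0 < (D.hT y).det := fun y => (hpos y).det_pos
  have hdne : ∀ y, (D.hT y).det ≠ 0 := fun y => (hdpos y).ne'
  have hdu : ∀ y, IsUnit (D.hT y).det := fun y => (hdne y).isUnit
  have hTd : ∀ a b, Differentiable ℝ fun y => D.hT y a b := fun a b =>
    (hsm a b).differentiable (by simp)
  have hfd : ∀ c, Differentiable ℝ fun y => f y c := fun c =>
    (hf_sm c).differentiable (by simp)
  have hfa : ∀ y, AltP (f y) := fun y => hf_alt y
  set i0 : Fin n := ⟨0, by omega⟩ with hi0
  set i1 : Fin n := ⟨1, by omega⟩ with hi1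
  have h0 : (i0 : ℕ) = 0 := rfl
  have h1 : (i1 : ℕ) = 1 := rfl
  let S : TensorField n (k+1) := fun y c => Real.sqrt (D.hT y).det * raiseAll D.hT f y c
  have hSd : ∀ c, Differentiable ℝ fun y => S y c := fun c =>
    ((diff_det D.hT hTd).sqrt hdne).mul (diff_raise D.hT f hTd hdne hfd c)
  have hSa : ∀ y, AltP (S y) := fun y => altP_mul (raiseAll_alt _ _ _ (hfa y)) _
  have hSt : ∀ (x : Pt n) (v : Fin (k+1) → Fin n), (∃ i, (v i : ℕ) < 2) → S x v = 0 := by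
    intro x v hv
    show Real.sqrt (D.hT x).det * raiseAll D.hT f x v = 0
    rw [raise_trans D.hT x (hpad x) (hdu x) f (hf_tr x) v hv, mul_zero]
  have hSr : IndepOfR S := by
    intro y y' hy
    funext c
    show Real.sqrt (D.hT y).det * raiseAll D.hT f y c
      = Real.sqrt (D.hT y').det * raiseAll D.hT f y' c
    unfold raiseAll
    rw [hTr y y' hy, hf_r y y' hy]
  let T : TensorField n (k+1+1) := fun y =>
    wed (fun b c => (if b = i1 then (1:ℝ) else 0) * S y c)
  have hTa : ∀ y, AltP (T y) := fun y => wed_alt fun b => altP_mul (hSa y) _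
  have hTdf : ∀ c, Differentiable ℝ fun y => T y c := diff_wedI i1 S hSd
  have hz : (1 / (Nat.factorial (k+1+1) : ℝ)) ≠ 0 := by positivity
  have hH : hodge hn D.metric (duWedge f) = fun y (idx : Fin (s+1) → Fin n) =>
      (1 / (Nat.factorial (k+1+1) : ℝ)) * ∑ a, T y a * eps hn a idx := by
    funext y idx
    unfold hodge
    congr 1
    refine Finset.sum_congr rfl fun a _ => ?_
    have hm : D.metric = kundtMetric D.Hfun D.Wfun D.hT := rfl
    rw [hm, kundt_det i0 i1 h0 h1 _ _ D.hT y (hpad y), abs_neg, abs_of_pos (hdpos y),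
      raise_kundt i0 i1 h0 h1 _ _ D.hT y (hpad y) (hdu y) f (hfa y) (hf_tr y), ← mul_assoc]
    congr 1
    show _ = wed (fun b c => (if b = i1 then (1:ℝ) else 0) *
      (Real.sqrt (D.hT y).det * raiseAll D.hT f y c)) a
    unfold wed
    rw [Finset.sum_mul]
    refine Finset.sum_congr rfl fun m _ => ?_
    ring
  unfold MaxwellEqs
  refine and_congr (closed_iff i0 i1 h0 h1 f hfd hf_alt hf_tr hf_r) ?_
  rw [hH]
  refine forall_congr' fun x => ?_
  exact (coclosed_dual hn T hTdf hTa _ hz x).trans (div_iff i1 h1 S hSd hSa hSt hSr x)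

end VSI
end
end
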